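/- Let r ≥ 3 and q = p^h > 4 with p prime, h ≥ 1, and let V be a quasi-Hermitian variety of PG(r,q^2) whose characteristic vector v^V belongs to C_p. Let π be a plane of PG(r,q^2) with |π ∩ V| ≤ q^3 + 2q^2 such that every line of π meets π ∩ V in at most q+1 points. Then π ∩ V is a classical unital of π; in particular |π ∩ V| = q^3 + 1. -/

import Mathlib

/-!
Common framework: `ProjPoint F n` is the set of points of the projective space
PG(n-1, |F|) (so PG(r, q²) corresponds to `n = r + 1` and `Fintype.card F = q ^ 2`).
Projective subspaces of projective dimension `k` are the submodules of `Fin n → F`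
of `finrank` equal to `k + 1`; lines have finrank 2, planes finrank 3 and
hyperplanes finrank `n - 1 = r`.
-/

open Module Matrix

/-- The points of the projective space PG(n-1, |F|): one-dimensional subspaces
of `F^n`. -/
def ProjPoint (F : Type) [Field F] (n : ℕ) : Type :=
  {W : Submodule F (Fin n → F) // finrank F W = 1}

/-- The set of projective points lying in a given subspace `W`. -/
def pointsIn (F : Type) [Field F] (n : ℕ) (W : Submodule F (Fin n → F)) :
    Set (ProjPoint F n) :=
  {P | P.1 ≤ W}

/-- The number of points of `V` lying in the subspace `W`. -/
noncomputable def secant (F : Type) [Field F] (n : ℕ) (V : Set (ProjPoint F n))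
    (W : Submodule F (Fin n → F)) : ℕ :=
  (V ∩ pointsIn F n W).ncard

/-- The characteristic vector of a set of projective points, with values in `F_p`. -/
noncomputable def charVec (F : Type) [Field F] (p n : ℕ) (S : Set (ProjPoint F n)) :
    ProjPoint F n → ZMod p :=
  Set.indicator S 1

/-- `C_p`: the `F_p`-code spanned by the characteristic vectors of hyperplanes. -/
def hypCode (F : Type) [Field F] (p n : ℕ) :
    Submodule (ZMod p) (ProjPoint F n → ZMod p) :=
  Submodule.span (ZMod p)
    {v | ∃ H : Submodule F (Fin n → F), finrank F H = n - 1 ∧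
      v = charVec F p n (pointsIn F n H)}

/-- A quasi-Hermitian variety of PG(r, q²): it has the size of a non-singular
Hermitian variety and the same two intersection numbers with hyperplanes.
(All identities are stated multiplied through by `q² - 1`.) -/
def IsQuasiHermitian (F : Type) [Field F] (q r : ℕ)
    (V : Set (ProjPoint F (r + 1))) : Prop :=
  (V.ncard : ℤ) * ((q : ℤ) ^ 2 - 1)
      = ((q : ℤ) ^ (r + 1) + (-1) ^ r) * ((q : ℤ) ^ r - (-1) ^ r) ∧
  ∀ H : Submodule F (Fin (r + 1) → F), finrank F H = r →
    ((secant F (r + 1) V H : ℤ) * ((q : ℤ) ^ 2 - 1)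
        = ((q : ℤ) ^ r + (-1) ^ (r - 1)) * ((q : ℤ) ^ (r - 1) - (-1) ^ (r - 1)) ∨
     (secant F (r + 1) V H : ℤ) * ((q : ℤ) ^ 2 - 1)
        = ((q : ℤ) ^ 2 - 1)
          + (q : ℤ) ^ 2 * (((q : ℤ) ^ (r - 1) + (-1) ^ r) * ((q : ℤ) ^ (r - 2) - (-1) ^ r)))

/-- The zero set, in PG(n-1,|F|), of the Hermitian form `x ↦ xᵀ A x^(q)`. -/
def hermSet (F : Type) [Field F] (q n : ℕ) (A : Matrix (Fin n) (Fin n) F) :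
    Set (ProjPoint F n) :=
  {P | ∀ x ∈ P.1, ∑ i, ∑ j, x i * A i j * (x j) ^ q = 0}

/-- A non-singular Hermitian variety of PG(n-1, q²). -/
def IsNonsingHermitian (F : Type) [Field F] (q n : ℕ)
    (V : Set (ProjPoint F n)) : Prop :=
  ∃ A : Matrix (Fin n) (Fin n) F, IsUnit A.det ∧
    Aᵀ = A.map (fun a => a ^ q) ∧ V = hermSet F q n A

/-- A singular Hermitian variety of PG(n-1, q²) whose singular space (the radical
of the Hermitian form) has projective dimension `d`. -/
def IsSingularHermitian (F : Type) [Field F] (q n d : ℕ)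
    (S : Set (ProjPoint F n)) : Prop :=
  ∃ A : Matrix (Fin n) (Fin n) F,
    Aᵀ = A.map (fun a => a ^ q) ∧
    finrank F (LinearMap.ker (Matrix.toLin' Aᵀ)) = d + 1 ∧
    S = hermSet F q n A

/-- A `d`-singular quasi-Hermitian variety of PG(r, q²). -/
def IsSingularQuasiHermitian (F : Type) [Field F] (q r d : ℕ)
    (S : Set (ProjPoint F (r + 1))) : Prop :=
  ∃ S₀ : Set (ProjPoint F (r + 1)), IsSingularHermitian F q (r + 1) d S₀ ∧
    S.ncard = S₀.ncard ∧
    ∀ H : Submodule F (Fin (r + 1) → F), finrank F H = r →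
      ∃ H₀ : Submodule F (Fin (r + 1) → F), finrank F H₀ = r ∧
        secant F (r + 1) S H = secant F (r + 1) S₀ H₀

/-- `U` is a classical unital (Hermitian curve) of the plane `π` of PG(n-1, q²):
in some coordinatization `e` of `π`, it is the zero set of a non-degenerate
Hermitian form on `F³`. -/
def IsClassicalUnital (F : Type) [Field F] (q n : ℕ)
    (π : Submodule F (Fin n → F)) (U : Set (ProjPoint F n)) : Prop :=
  ∃ e : (Fin 3 → F) →ₗ[F] (Fin n → F), LinearMap.ker e = ⊥ ∧ LinearMap.range e = π ∧
    ∃ A : Matrix (Fin 3) (Fin 3) F, IsUnit A.det ∧ Aᵀ = A.map (fun a => a ^ q) ∧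
      U = {P | ∃ y : Fin 3 → F, y ≠ 0 ∧ P.1 = Submodule.span F {e y} ∧
        ∑ i, ∑ j, y i * A i j * (y j) ^ q = 0}

open Polynomial in
theorem dvd_det_of_rank {F : Type*} [Field F] {s : ℕ} (A : Matrix (Fin s) (Fin s) F[X]) (y : F) (N : ℕ)
    (h : (A.map (eval y)).rank ≤ N) : (X - C y) ^ (s - N) ∣ A.det := by
  classical
  obtain ⟨L, L', d, hd⟩ := Matrix.Pivot.exists_list_transvec_mul_mul_list_transvec_eq_diagonal (A.map (eval y))
  set P := (L.map Matrix.TransvectionStruct.toMatrix).prod with hP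
  set P' := (L'.map Matrix.TransvectionStruct.toMatrix).prod with hP'
  have hPd : P.det = 1 := Matrix.TransvectionStruct.det_toMatrix_prod L
  have hPd' : P'.det = 1 := Matrix.TransvectionStruct.det_toMatrix_prod L'
  let B := P.map C * A * P'.map C
  have hB : B.det = A.det := by
    have e1 : (P.map C).det = C P.det := by
      simpa using (RingHom.map_det (C : F →+* F[X]) P).symm
    have e2 : (P'.map C).det = C P'.det := by
      simpa using (RingHom.map_det (C : F →+* F[X]) P').symm
    simp only [B, Matrix.det_mul, e1, e2, hPd, hPd']; simp
  have hBe : B.map (eval y) = Matrix.diagonal d := by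
    rw [← hd]
    have : ∀ M : Matrix (Fin s) (Fin s) F[X], M.map (eval y) = (evalRingHom y).mapMatrix M := by
      intro M; rfl
    simp only [B]
    rw [this, map_mul, map_mul, ← this, ← this, ← this]
    have hc : ∀ M : Matrix (Fin s) (Fin s) F, (M.map C).map (eval y) = M := by
      intro M; ext i j; simp
    rw [hc, hc]
  have hrank : (Matrix.diagonal d).rank ≤ N := by
    rw [← hd]
    exact ((Matrix.rank_mul_le_left _ _).trans (Matrix.rank_mul_le_right _ _)).trans h
  rw [Matrix.rank_diagonal] at hrank
  let Z := Finset.univ.filter (fun i => d i = 0)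
  have hZ : s - N ≤ Z.card := by
    have h1 : Fintype.card {i // d i ≠ 0} = (Finset.univ.filter (fun i => d i ≠ 0)).card := by
      rw [Fintype.card_subtype]
    have h2 := Finset.card_filter_add_card_filter_not (s := (Finset.univ : Finset (Fin s))) (fun i => d i = 0)
    simp only [Finset.card_univ, Fintype.card_fin] at h2
    have h3 : (Finset.univ.filter (fun i => d i ≠ 0)).card ≤ N := by rw [← h1]; exact hrank
    simp only [Z]
    simp only [ne_eq] at h3
    omega
  have hrow : ∀ i ∈ Z, ∀ j, (X - C y) ∣ B i j := by
    intro i hi j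
    rw [dvd_iff_isRoot, IsRoot.def]
    have := congrFun (congrFun hBe i) j
    simp only [Matrix.map_apply] at this
    rw [this]
    have hi' : d i = 0 := by simpa [Z] using hi
    by_cases hij : i = j
    · subst hij; simp [hi']
    · simp [hij]
  have hex : ∀ i j, ∃ r, B i j = (if i ∈ Z then (X - C y) else 1) * r := by
    intro i j
    split_ifs with hi
    · exact hrow i hi j
    · exact ⟨B i j, by simp⟩
  choose r hr using hex
  have hBr : B = Matrix.of (fun i j => (if i ∈ Z then (X - C y) else 1) * (Matrix.of r) i j) := by
    ext1 i j; simp [hr]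
  rw [← hB, hBr, Matrix.det_mul_column]
  refine Dvd.dvd.mul_right ?_ _
  rw [Finset.prod_ite_mem]
  simp only [Finset.univ_inter, Finset.prod_const]
  exact pow_dvd_pow _ hZ

open Polynomial in
theorem hankel_bound {F : Type*} [Field F] [Fintype F] (s : ℕ) (S : F → Finset F)
    (p : ℕ → F[X]) (hdeg : ∀ k ≤ 2 * s - 2, (p k).natDegree ≤ k)
    (hev : ∀ k ≤ 2 * s - 2, ∀ y, (p k).eval y = ∑ x ∈ S y, x ^ k)
    (y0 : F) (hy0 : (S y0).card = s) :
    ∑ y, (s - (S y).card) ≤ s * (s - 1) := by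
  classical
  let A : Matrix (Fin s) (Fin s) F[X] := Matrix.of fun i j => p (i + j)
  have hle : ∀ i j : Fin s, (i : ℕ) + j ≤ 2 * s - 2 := by intro i j; omega
  let Vd : (y : F) → Matrix (S y) (Fin s) F := fun y => Matrix.of fun x i => (x : F) ^ (i : ℕ)
  have hA : ∀ y, A.map (eval y) = (Vd y)ᵀ * (Vd y) := by
    intro y; ext i j
    simp only [A, Matrix.map_apply, Matrix.of_apply, Matrix.mul_apply, Matrix.transpose_apply, Vd]
    rw [hev _ (hle i j)]
    rw [← Finset.sum_coe_sort]
    simp [pow_add]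
  have hdvd : ∀ y, (X - C y) ^ (s - (S y).card) ∣ A.det := by
    intro y
    apply dvd_det_of_rank
    rw [hA]
    refine (Matrix.rank_mul_le_right _ _).trans ?_
    simpa using Matrix.rank_le_card_height (Vd y)
  have hne : A.det ≠ 0 := by
    intro h0
    have h1 : (A.map (eval y0)).det = 0 := by
      have := RingHom.map_det (evalRingHom y0) A
      rw [h0, map_zero] at this
      exact this.symm
    rw [hA] at h1
    let e : Fin s ≃ S y0 := (Fintype.equivFinOfCardEq (by simpa using hy0)).symm
    let W : Matrix (Fin s) (Fin s) F := Matrix.vandermonde (fun i => ((e i : S y0) : F))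
    have : (Vd y0)ᵀ * (Vd y0) = Wᵀ * W := by
      ext i j
      simp only [Matrix.mul_apply, Matrix.transpose_apply, Vd, W, Matrix.vandermonde_apply, Matrix.of_apply]
      rw [← Equiv.sum_comp e]
    rw [this, Matrix.det_mul, Matrix.det_transpose, mul_self_eq_zero, Matrix.det_vandermonde_eq_zero_iff] at h1
    obtain ⟨i, j, h, hij⟩ := h1
    exact hij (e.injective (Subtype.ext h))
  have hdeg' : A.det.natDegree ≤ s * (s - 1) := by
    rw [Matrix.det_apply]
    apply natDegree_sum_le_of_forall_le
    intro σ _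
    refine (natDegree_smul_le _ _).trans ?_
    refine (natDegree_prod_le _ _).trans ?_
    calc ∑ i, (A (σ i) i).natDegree ≤ ∑ i, ((σ i : ℕ) + (i : ℕ)) :=
          Finset.sum_le_sum fun i _ => hdeg _ (hle _ _)
      _ = ∑ i : Fin s, (i : ℕ) + ∑ i : Fin s, (i : ℕ) := by
          rw [Finset.sum_add_distrib, Equiv.sum_comp σ (fun i => (i : ℕ))]
      _ = s * (s - 1) := by
          rw [Fin.sum_univ_eq_sum_range (fun i => i), ← mul_two, Finset.sum_range_id_mul_two]
  have hprod : (∏ y : F, (X - C y) ^ (s - (S y).card)) ∣ A.det := by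
    apply Finset.prod_dvd_of_coprime
    · intro a _ b _ hab
      exact (IsCoprime.pow (pairwise_coprime_X_sub_C Function.injective_id hab))
    · intro y _; exact hdvd y
  have := natDegree_le_of_dvd hprod hne
  rw [natDegree_prod_of_monic _ _ (fun y _ => (monic_X_sub_C y).pow _)] at this
  simp only [natDegree_pow, natDegree_X_sub_C, mul_one] at this
  exact this.trans hdeg'

open Polynomial in
theorem exists_inv_seq {F : Type*} [Field F] (r : ℕ → F[X]) (c : F) (hc : c ≠ 0) (h0 : r 0 = C c)
    (hdeg : ∀ k, (r k).natDegree ≤ k) :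
    ∃ d : ℕ → F[X], d 0 = 1 ∧ (∀ j, (d j).natDegree ≤ j) ∧
      ∀ j, 1 ≤ j → ∑ m ∈ Finset.range (j + 1), d m * r (j - m) = 0 := by
  have hu : IsUnit (C c : F[X]) := isUnit_C.2 (isUnit_iff_ne_zero.2 hc)
  obtain ⟨u, hu⟩ := hu
  let R : PowerSeries F[X] := PowerSeries.mk r
  have hR : PowerSeries.constantCoeff R = u := by simp [R, hu, h0, ← PowerSeries.coeff_zero_eq_constantCoeff_apply]
  let I := PowerSeries.invOfUnit R u
  have hI : R * I = 1 := PowerSeries.mul_invOfUnit R u hR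
  let d : ℕ → F[X] := fun j => C c * PowerSeries.coeff j I
  have hrel : ∀ j, 1 ≤ j → ∑ m ∈ Finset.range (j + 1), d m * r (j - m) = 0 := by
    intro j hj
    have h1 : PowerSeries.coeff j (I * R) = 0 := by
      rw [mul_comm, hI, PowerSeries.coeff_one, if_neg (by omega)]
    rw [PowerSeries.coeff_mul, Finset.Nat.sum_antidiagonal_eq_sum_range_succ_mk] at h1
    have : ∑ m ∈ Finset.range (j + 1), d m * r (j - m) = C c * ∑ k ∈ Finset.range j.succ,
        (PowerSeries.coeff k I) * (PowerSeries.coeff (j - k) R) := by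
      rw [Finset.mul_sum]
      refine Finset.sum_congr rfl fun k _ => ?_
      simp [d, R, mul_assoc]
    rw [this, h1, mul_zero]
  have hd0 : d 0 = 1 := by
    have h1 : PowerSeries.coeff 0 (R * I) = 1 := by rw [hI]; simp
    rw [PowerSeries.coeff_mul] at h1
    simpa [d, R, h0] using h1
  refine ⟨d, hd0, ?_, hrel⟩
  intro j
  induction j using Nat.strong_induction_on with
  | _ j ih =>
    rcases Nat.eq_zero_or_pos j with rfl | hj
    · simp [hd0]
    · have h1 := hrel j hj
      rw [Finset.sum_range_succ, Nat.sub_self, h0] at h1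
      have h2 : d j = - C c⁻¹ * ∑ m ∈ Finset.range j, d m * r (j - m) := by
        have h3 : d j * C c = - ∑ m ∈ Finset.range j, d m * r (j - m) := by linear_combination h1
        have h4 : (C c : F[X]) * C c⁻¹ = 1 := by rw [← C_mul, mul_inv_cancel₀ hc, C_1]
        calc d j = d j * (C c * C c⁻¹) := by rw [h4, mul_one]
          _ = (d j * C c) * C c⁻¹ := by ring
          _ = _ := by rw [h3]; ring
      rw [h2, ← C_neg]
      refine (natDegree_C_mul_le _ _).trans ?_
      apply natDegree_sum_le_of_forall_le
      intro m hm
      rw [Finset.mem_range] at hm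
      refine natDegree_mul_le.trans ?_
      have := ih m hm
      have := hdeg (j - m)
      omega

open Polynomial in
theorem lemA {F : Type*} [Field F] [Fintype F] [DecidableEq F] (q : ℕ) (hq : 3 ≤ q)
    (hF : Fintype.card F = q ^ 2) (hqF : (q : F) = 0)
    (S : F → Finset F) (T : Finset F) (hTc : T.card = q) (hT : ∀ y ∈ T, S y = {0})
    (hS : ∀ y, y ∉ T → (S y).card = q + 1)
    (p : ℕ → F[X]) (hdeg : ∀ k, 1 ≤ k → k ≤ q ^ 2 - 2 → (p k).natDegree ≤ k - 1)
    (hev : ∀ k, 1 ≤ k → k ≤ q ^ 2 - 2 → ∀ y, (p k).eval y = ∑ x ∈ S y, x ^ k)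
    (hline0 : (Finset.univ.filter fun y => (0 : F) ∈ S y).card ≤ q + 1)
    (hline : ∀ l : F, l ≠ 0 → ∀ y0 ∈ T, (Finset.univ.filter fun y => l * (y - y0) ∈ S y).card = q + 1) :
    ∃ e : F, ∀ y, y ∉ T → 0 ∉ S y ∧ ∑ x ∈ S y, x = 0 ∧ ∑ x ∈ S y, x⁻¹ = e := by
  have hqq : 3 * q ≤ q ^ 2 := by nlinarith
  let Tp : F[X] := ∏ t ∈ T, (X - C t)
  have hTm : Tp.Monic := monic_prod_of_monic _ _ fun t _ => monic_X_sub_C t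
  have hTd : Tp.natDegree = q := by
    simp only [Tp]
    rw [natDegree_prod_of_monic _ _ fun t _ => monic_X_sub_C t]; simp [hTc]
  have hTev : ∀ y, y ∉ T → Tp.eval y ≠ 0 := by
    intro y hy
    simp only [Tp, eval_prod, Finset.prod_ne_zero_iff]
    intro t ht
    simp only [eval_sub, eval_X, eval_C, sub_ne_zero]
    rintro rfl; exact hy ht
  have hTev0 : ∀ y ∈ T, Tp.eval y = 0 := by
    intro y hy
    simp only [Tp, eval_prod]
    exact Finset.prod_eq_zero hy (by simp)
  have hTdvd : ∀ P : F[X], (∀ y ∈ T, P.eval y = 0) → Tp ∣ P := by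
    intro P hP
    apply Finset.prod_dvd_of_coprime
    · intro a _ b _ hab
      exact pairwise_coprime_X_sub_C Function.injective_id hab
    · intro y hy
      exact dvd_iff_isRoot.2 (hP y hy)
  have hpd : ∀ k, 1 ≤ k → k ≤ q ^ 2 - 2 → Tp ∣ p k := by
    intro k h1 h2
    apply hTdvd
    intro y hy
    rw [hev k h1 h2, hT y hy]
    simp; omega
  have hp0 : ∀ k, 1 ≤ k → k ≤ q → p k = 0 := by
    intro k h1 h2
    apply eq_zero_of_dvd_of_natDegree_lt (hpd k h1 (by omega))
    have := hdeg k h1 (by omega)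
    omega
  have hrex : ∀ k, ∃ r : F[X], r.natDegree ≤ k ∧ (k ≤ q → p (q + 1 + k) = Tp * r) := by
    intro k
    by_cases hk : k ≤ q
    · obtain ⟨r, hr⟩ := hpd (q + 1 + k) (by omega) (by omega)
      refine ⟨r, ?_, fun _ => hr⟩
      by_cases hr0 : r = 0
      · simp [hr0]
      have h1 := hdeg (q + 1 + k) (by omega) (by omega)
      rw [hr, hTm.natDegree_mul' hr0, hTd] at h1
      omega
    · exact ⟨0, by simp, fun h => absurd h hk⟩
  choose r hrd hr using hrex
  have hr0 : ∃ c, r 0 = C c := ⟨_, eq_C_of_natDegree_le_zero (hrd 0)⟩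
  obtain ⟨c, hr0⟩ := hr0
  -- local polynomials
  let D : F → F[X] := fun y => ∏ x ∈ S y, (X - C x)
  have hDd : ∀ y, y ∉ T → (D y).natDegree = q + 1 := by
    intro y hy
    simp only [D]
    rw [natDegree_prod_of_monic _ _ fun t _ => monic_X_sub_C t]; simp [hS y hy]
  have hDm : ∀ y, (D y).Monic := fun y => monic_prod_of_monic _ _ fun t _ => monic_X_sub_C t
  have hDev : ∀ y, ∀ x ∈ S y, (D y).eval x = 0 := by
    intro y x hx
    simp only [D, eval_prod]
    exact Finset.prod_eq_zero hx (by simp)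
  have hDev' : ∀ y, ∀ x, (D y).eval x = 0 → x ∈ S y := by
    intro y x hx
    simp only [D, eval_prod, Finset.prod_eq_zero_iff] at hx
    obtain ⟨a, ha, h⟩ := hx
    simp only [eval_sub, eval_X, eval_C, sub_eq_zero] at h
    rwa [h]
  have hkey : ∀ y, y ∉ T → ∀ j, ∑ i ∈ Finset.range (q + 2), (D y).coeff i * ∑ x ∈ S y, x ^ (i + j) = 0 := by
    intro y hy j
    simp only [Finset.mul_sum]
    rw [Finset.sum_comm]
    apply Finset.sum_eq_zero
    intro x hx
    have := hDev y x hx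
    rw [eval_eq_sum_range, hDd y hy] at this
    calc _ = (∑ i ∈ Finset.range (q + 2), (D y).coeff i * x ^ i) * x ^ j := by
          rw [Finset.sum_mul]; exact Finset.sum_congr rfl fun i _ => by ring
      _ = 0 := by rw [this, zero_mul]
  have hP0 : ∀ y, y ∉ T → ∑ x ∈ S y, x ^ 0 = 1 := by
    intro y hy; simp [hS y hy, hqF]
  have hPk : ∀ y k, 1 ≤ k → k ≤ q → ∑ x ∈ S y, x ^ k = 0 := by
    intro y k h1 h2
    rw [← hev k h1 (by omega), hp0 k h1 h2, eval_zero]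
  have hPr : ∀ y k, k ≤ q → ∑ x ∈ S y, x ^ (q + 1 + k) = Tp.eval y * (r k).eval y := by
    intro y k h2
    rw [← hev _ (by omega) (by omega), hr k h2, eval_mul]
  have hlead : ∀ y, y ∉ T → (D y).coeff (q + 1) = 1 := by
    intro y hy
    have := hDm y
    rwa [Monic, leadingCoeff, hDd y hy] at this
  have hD0 : ∀ y, y ∉ T → (D y).coeff 0 = - (Tp.eval y * c) := by
    intro y hy
    have h := hkey y hy 0
    rw [Finset.sum_range_succ, Finset.sum_range_succ', Finset.sum_eq_zero] at h
    · have h2 := hPr y 0 (by omega)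
      simp only [add_zero] at h2 h
      rw [hlead y hy, hP0 y hy, h2, hr0, eval_C] at h
      linear_combination h
    · intro i hi
      rw [Finset.mem_range] at hi
      rw [add_zero, hPk y (i + 1) (by omega) (by omega), mul_zero]
  have hc : c ≠ 0 := by
    rintro rfl
    have : ∀ y, (0 : F) ∈ S y := by
      intro y
      by_cases hy : y ∈ T
      · rw [hT y hy]; simp
      · apply hDev'
        rw [← coeff_zero_eq_eval_zero, hD0 y hy]; simp
    simp only [this, Finset.filter_true, Finset.card_univ, hF] at hline0
    nlinarith
  obtain ⟨d, hd0, hdd, hdrel⟩ := exists_inv_seq r c hc hr0 hrd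
  have hdD : ∀ y, y ∉ T → ∀ j, j ≤ q → (D y).coeff (q + 1 - j) = (d j).eval y := by
    intro y hy j
    induction j using Nat.strong_induction_on with
    | _ j ih =>
      intro hj
      rcases Nat.eq_zero_or_pos j with rfl | hj0
      · simp [hd0, hlead y hy]
      have h1 := hkey y hy j
      rw [← Finset.sum_range_reflect, ← Nat.add_sub_cancel' (show j + 1 ≤ q + 2 by omega),
        Finset.sum_range_add] at h1
      have hz : ∑ i ∈ Finset.range (q + 2 - (j + 1)),
          (D y).coeff (j + 1 + (q + 2 - (j + 1)) - 1 - (j + 1 + i)) *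
            ∑ x ∈ S y, x ^ (j + 1 + (q + 2 - (j + 1)) - 1 - (j + 1 + i) + j) = 0 := by
        apply Finset.sum_eq_zero
        intro i hi
        rw [Finset.mem_range] at hi
        rw [hPk y _ (by omega) (by omega), mul_zero]
      rw [hz, add_zero] at h1
      · have h2 : ∀ m ∈ Finset.range (j + 1),
            (D y).coeff (j + 1 + (q + 2 - (j + 1)) - 1 - m) *
              ∑ x ∈ S y, x ^ (j + 1 + (q + 2 - (j + 1)) - 1 - m + j)
            = (D y).coeff (q + 1 - m) * (Tp.eval y * (r (j - m)).eval y) := by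
          intro m hm
          rw [Finset.mem_range] at hm
          rw [← hPr y (j - m) (by omega)]
          rw [show j + 1 + (q + 2 - (j + 1)) - 1 - m = q + 1 - m by omega,
            show q + 1 - m + j = q + 1 + (j - m) by omega]
        rw [Finset.sum_congr rfl h2, Finset.sum_range_succ] at h1
        have h3 := congrArg (eval y) (hdrel j hj0)
        rw [eval_finsetSum, Finset.sum_range_succ] at h3
        simp only [eval_mul, eval_zero, Nat.sub_self, hr0, eval_C] at h1 h3
        have h4 : ∑ m ∈ Finset.range j, (D y).coeff (q + 1 - m) * (Tp.eval y * (r (j - m)).eval y)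
            = Tp.eval y * ∑ m ∈ Finset.range j, (d m).eval y * (r (j - m)).eval y := by
          rw [Finset.mul_sum]
          refine Finset.sum_congr rfl fun m hm => ?_
          rw [Finset.mem_range] at hm
          rw [ih m hm (by omega)]; ring
        rw [h4] at h1
        have h5 : Tp.eval y * c * ((D y).coeff (q + 1 - j) - (d j).eval y) = 0 := by
          linear_combination h1 - Tp.eval y * h3
        rcases mul_eq_zero.1 h5 with h6 | h6
        · exact absurd h6 (mul_ne_zero (hTev y hy) hc)
        · exact sub_eq_zero.1 h6
  have hDexp : ∀ y, y ∉ T → ∀ x, (D y).eval x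
      = ∑ m ∈ Finset.range (q + 1), (d m).eval y * x ^ (q + 1 - m) - c * Tp.eval y := by
    intro y hy x
    rw [eval_eq_sum_range, hDd y hy, Finset.sum_range_succ', hD0 y hy, ← Finset.sum_range_reflect]
    have : ∀ m ∈ Finset.range (q + 1), (D y).coeff (q + 1 - 1 - m + 1) * x ^ (q + 1 - 1 - m + 1)
        = (d m).eval y * x ^ (q + 1 - m) := by
      intro m hm
      rw [Finset.mem_range] at hm
      rw [← hdD y hy m (by omega)]
      congr 2 <;> omega
    rw [Finset.sum_congr rfl this]; ring
  have hTder : ∀ y ∈ T, (derivative Tp).eval y ≠ 0 := by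
    intro y hy h0
    have hsep : Tp.Separable := separable_prod_X_sub_C_iff'.2 (fun x _ z _ h => h)
    exact hsep.eval₂_derivative_ne_zero (RingHom.id F) (x := y) (by simpa using hTev0 y hy) (by simpa using h0)
  have hdq : ∀ y0 ∈ T, (d q).eval y0 = 0 := by
    intro y0 hy0
    by_contra hne
    obtain ⟨l, hl⟩ : ∃ l, l = c * (derivative Tp).eval y0 / (d q).eval y0 := ⟨_, rfl⟩
    have hl0 : l ≠ 0 := by rw [hl]; exact div_ne_zero (mul_ne_zero hc (hTder y0 hy0)) hne
    let g : F[X] := ∑ m ∈ Finset.range (q + 1), d m * (C l * (X - C y0)) ^ (q + 1 - m) - C c * Tp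
    have hgev : ∀ y, g.eval y = ∑ m ∈ Finset.range (q + 1), (d m).eval y * (l * (y - y0)) ^ (q + 1 - m) - c * Tp.eval y := by
      intro y; simp [g, eval_finsetSum]
    have hgd : g.natDegree ≤ q + 1 := by
      refine (natDegree_sub_le _ _).trans (max_le ?_ ?_)
      · apply natDegree_sum_le_of_forall_le
        intro m hm
        rw [Finset.mem_range] at hm
        refine natDegree_mul_le.trans ?_
        have h1 : ((C l * (X - C y0)) ^ (q + 1 - m)).natDegree ≤ q + 1 - m := by
          refine natDegree_pow_le.trans ?_
          have : (C l * (X - C y0)).natDegree ≤ 1 := (natDegree_C_mul_le _ _).trans (natDegree_X_sub_C_le _)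
          nlinarith
        have := hdd m
        omega
      · refine (natDegree_C_mul_le _ _).trans ?_
        omega
    have hg0 : g.eval y0 = 0 := by
      rw [hgev, hTev0 y0 hy0, Finset.sum_eq_zero]
      · simp
      · intro m hm
        rw [Finset.mem_range] at hm
        rw [sub_self, mul_zero, zero_pow (by omega), mul_zero]
    have hgder : (derivative g).eval y0 = 0 := by
      simp only [g, derivative_sub, derivative_sum, eval_sub, eval_finsetSum, derivative_mul, derivative_C,
        zero_mul, zero_add, eval_mul, eval_C, eval_add]
      rw [Finset.sum_range_succ, Finset.sum_eq_zero]
      · simp only [derivative_pow]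
        simp
        rw [hl]; field_simp; ring
      · intro m hm
        rw [Finset.mem_range] at hm
        obtain ⟨k, hk⟩ : ∃ k, q + 1 - m = k + 2 := ⟨q + 1 - m - 2, by omega⟩
        simp [derivative_pow, hk]
    have hgz : g = 0 := by
      by_contra hgne
      let Z := Finset.univ.filter fun y => l * (y - y0) ∈ S y
      have hZ : Z.card = q + 1 := hline l hl0 y0 hy0
      have hy0Z : y0 ∈ Z := by simp [Z, hT y0 hy0]
      have hZr : ∀ y ∈ Z, g.eval y = 0 := by
        intro y hy
        have hy' : l * (y - y0) ∈ S y := by simpa [Z] using hy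
        by_cases hyT : y ∈ T
        · rw [hT y hyT, Finset.mem_singleton] at hy'
          rcases mul_eq_zero.1 hy' with h | h
          · exact absurd h hl0
          · rw [sub_eq_zero.1 h]; exact hg0
        · rw [hgev, ← hDexp y hyT, hDev y _ hy']
      have hmult : 1 < g.rootMultiplicity y0 :=
        (one_lt_rootMultiplicity_iff_isRoot hgne).2 ⟨hg0, hgder⟩
      have hle : y0 ::ₘ Z.val ≤ g.roots := by
        rw [Multiset.le_iff_count]
        intro a
        rw [count_roots, Multiset.count_cons]
        have hca : Multiset.count a Z.val = if a ∈ Z then 1 else 0 := by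
          split_ifs with h
          · exact Multiset.count_eq_one_of_mem Z.nodup h
          · exact Multiset.count_eq_zero_of_notMem h
        rw [hca]
        by_cases ha : a = y0
        · subst ha; simp [hy0Z]; omega
        · rw [if_neg ha]
          split_ifs with h
          · rw [add_zero]; exact (rootMultiplicity_pos hgne).2 (hZr a h)
          · omega
      have h1 := Multiset.card_le_card hle
      rw [Multiset.card_cons, Finset.card_val, hZ] at h1
      have h2 := card_roots' g
      omega
    have hall : (Finset.univ \ T) ⊆ Finset.univ.filter fun y => l * (y - y0) ∈ S y := by
      intro y hy
      have hy : y ∉ T := by simpa using hy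
      simp only [Finset.mem_filter, Finset.mem_univ, true_and]
      apply hDev'
      rw [hDexp y hy, ← hgev, hgz, eval_zero]
    have h1 := Finset.card_le_card hall
    rw [hline l hl0 y0 hy0, Finset.card_sdiff_of_subset (Finset.subset_univ _), Finset.card_univ, hF, hTc] at h1
    omega
  obtain ⟨e', he'⟩ := hTdvd _ hdq
  have he'd : e'.natDegree ≤ 0 := by
    by_cases h0 : e' = 0
    · simp [h0]
    have h1 := hdd q
    rw [he', hTm.natDegree_mul' h0, hTd] at h1
    omega
  rw [eq_C_of_natDegree_le_zero he'd] at he'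
  refine ⟨e'.coeff 0 / c, ?_⟩
  intro y hy
  have hDy0 : (D y).eval 0 ≠ 0 := by
    rw [← coeff_zero_eq_eval_zero, hD0 y hy]
    exact neg_ne_zero.2 (mul_ne_zero (hTev y hy) hc)
  have h0S : (0 : F) ∉ S y := fun h => hDy0 (hDev y 0 h)
  refine ⟨h0S, by simpa using hPk y 1 le_rfl (by omega), ?_⟩
  have hder : (derivative (D y)).eval 0 = (D y).eval 0 * ∑ x ∈ S y, (0 - x)⁻¹ := by
    simp only [D]
    rw [derivative_prod_finset, eval_finsetSum, eval_prod, Finset.mul_sum]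
    refine Finset.sum_congr rfl fun x hx => ?_
    have hx0 : x ≠ 0 := fun h => h0S (h ▸ hx)
    rw [← Finset.mul_prod_erase _ _ hx]
    simp [eval_prod]
    field_simp
  have hder2 : (derivative (D y)).eval 0 = (D y).coeff 1 := by
    rw [← coeff_zero_eq_eval_zero, coeff_derivative]; simp
  rw [hder2, ← coeff_zero_eq_eval_zero, hD0 y hy] at hder
  have h1 := hdD y hy q le_rfl
  rw [show q + 1 - q = 1 by omega, he'] at h1
  simp only [eval_mul, eval_C] at h1
  rw [h1] at hder
  simp only [zero_sub, inv_neg, Finset.sum_neg_distrib] at hder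
  have hT' := hTev y hy
  rw [eq_div_iff hc]
  apply mul_left_cancel₀ hT'
  linear_combination -hder

def I2 (F : Type) {E : Type} [Field F] [AddCommGroup E] [Module F E] (u w : E) : Prop :=
  ∀ a b : F, a • u + b • w = 0 → a = 0 ∧ b = 0

def I3 (F : Type) {E : Type} [Field F] [AddCommGroup E] [Module F E] (u v w : E) : Prop :=
  ∀ a b c : F, a • u + b • v + c • w = 0 → a = 0 ∧ b = 0 ∧ c = 0

open Classical in
noncomputable def xs (F : Type) {E : Type} [Field F] [Fintype F] [AddCommGroup E] [Module F E]
    (b : E → Prop) (u w : E) : Finset F :=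
  Finset.univ.filter (fun x => b (x • u + w))

open Classical in
noncomputable def io {E : Type} (b : E → Prop) (v : E) : ℕ := if b v then 1 else 0

noncomputable def Nn (F : Type) {E : Type} [Field F] [Fintype F] [AddCommGroup E] [Module F E]
    (b : E → Prop) (u w : E) : ℕ := io b u + (xs F b u w).card

open Polynomial in
structure Cfg (F E : Type) [Field F] [Fintype F] [AddCommGroup E] [Module F E] (q : ℕ) (b : E → Prop) :
    Prop where
  hq : 3 ≤ q
  card : Fintype.card F = q ^ 2
  qF : (q : F) = 0
  dim : finrank F E = 3
  b0 : ¬ b 0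
  smul : ∀ c : F, c ≠ 0 → ∀ v, b (c • v) ↔ b v
  N1 : ∀ u w, I2 F u w → (Nn F b u w : F) = 1
  le : ∀ u w, I2 F u w → Nn F b u w ≤ q + 1
  pow : ∀ u v w, I3 F u v w → ∀ k, k ≤ q ^ 2 - 2 → ∃ P : F[X], P.natDegree ≤ k ∧
    (∀ y, P.eval y = ∑ x ∈ xs F b u (y • v + w), x ^ k) ∧ P.coeff k = ∑ x ∈ xs F b u v, x ^ k

section LI
variable {F E : Type} [Field F] [AddCommGroup E] [Module F E]

theorem I3_iff {u v w : E} : I3 F u v w ↔ LinearIndependent F ![u, v, w] := by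
  rw [Fintype.linearIndependent_iff]
  constructor
  · intro h g hg i
    rw [Fin.sum_univ_three] at hg
    have := h _ _ _ hg
    fin_cases i
    · exact this.1
    · exact this.2.1
    · exact this.2.2
  · intro h a b c habc
    have := h ![a, b, c] (by rw [Fin.sum_univ_three]; simpa using habc)
    exact ⟨this 0, this 1, this 2⟩

theorem I2_iff {u w : E} : I2 F u w ↔ LinearIndependent F ![u, w] := by
  rw [LinearIndependent.pair_iff]; rfl

theorem I3.i2 {u v w : E} (h : I3 F u v w) : I2 F u v := by
  intro a b hab
  have := h a b 0 (by simpa using hab)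
  exact ⟨this.1, this.2.1⟩

theorem I3.i2y {u v w : E} (h : I3 F u v w) (y : F) : I2 F u (y • v + w) := by
  intro a b hab
  have := h a (b * y) b (by rw [← hab]; module)
  exact ⟨this.1, this.2.2⟩

theorem I2.symm {u w : E} (h : I2 F u w) : I2 F w u := by
  intro a b hab
  have := h b a (by rw [← hab]; module)
  exact ⟨this.2, this.1⟩

theorem I2.ne {u w : E} (h : I2 F u w) : u ≠ 0 := by
  rintro rfl
  have := h 1 0 (by simp)
  simpa using this.1

theorem I3.ne {u v w : E} (h : I3 F u v w) : u ≠ 0 := h.i2.ne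

theorem I3.swap23 {u v w : E} (h : I3 F u v w) : I3 F u w v := by
  intro a b c hab
  have := h a c b (by rw [← hab]; module)
  exact ⟨this.1, this.2.2, this.2.1⟩

theorem I3.swap12 {u v w : E} (h : I3 F u v w) : I3 F v u w := by
  intro a b c hab
  have := h b a c (by rw [← hab]; module)
  exact ⟨this.2.1, this.1, this.2.2⟩

theorem exists_ext1 (hd : finrank F E = 3) {u : E} (hu : u ≠ 0) : ∃ w, I2 F u w := by
  by_contra hcon
  push Not at hcon
  have hle : finrank F E ≤ 1 := by
    refine finrank_le_one u ?_
    intro w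
    have := hcon w
    simp only [I2, not_forall] at this
    obtain ⟨a, b, hab, h⟩ := this
    have hb : b ≠ 0 := by
      rintro rfl
      simp only [zero_smul, add_zero, smul_eq_zero] at hab
      rcases hab with h' | h'
      · exact h ⟨h', rfl⟩
      · exact hu h'
    refine ⟨-b⁻¹ * a, ?_⟩
    have : b • w = - (a • u) := by rw [eq_neg_iff_add_eq_zero, add_comm]; exact hab
    calc (-b⁻¹ * a) • u = b⁻¹ • (-(a • u)) := by module
      _ = b⁻¹ • b • w := by rw [this]
      _ = w := by rw [smul_smul, inv_mul_cancel₀ hb, one_smul]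
  omega

theorem exists_ext2 (hd : finrank F E = 3) {u w : E} (h : I2 F u w) : ∃ v, I3 F u w v := by
  by_contra hcon
  push Not at hcon
  have htop : Submodule.span F {u, w} = ⊤ := by
    rw [eq_top_iff]
    intro v _
    have := hcon v
    simp only [I3, not_forall] at this
    obtain ⟨a, b, c, hab, hn⟩ := this
    have hc : c ≠ 0 := by
      rintro rfl
      have := h a b (by simpa using hab)
      exact hn ⟨this.1, this.2, rfl⟩
    rw [Submodule.mem_span_pair]
    refine ⟨-c⁻¹ * a, -c⁻¹ * b, ?_⟩
    have : c • v = - (a • u + b • w) := by rw [eq_neg_iff_add_eq_zero, add_comm]; exact hab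
    calc (-c⁻¹ * a) • u + (-c⁻¹ * b) • w = c⁻¹ • (-(a • u + b • w)) := by module
      _ = c⁻¹ • c • v := by rw [this]
      _ = v := by rw [smul_smul, inv_mul_cancel₀ hc, one_smul]
  have h2 : finrank F (Submodule.span F ({u, w} : Set E)) ≤ 2 := by
    classical
    have h1 := finrank_span_finset_le_card (R := F) ({u, w} : Finset E)
    have h3 := h1.trans (Finset.card_le_two (a := u) (b := w))
    rwa [Finset.coe_pair] at h3
  rw [htop, finrank_top] at h2
  omega

theorem I3.coords (hd : finrank F E = 3) {u v w : E} (h : I3 F u v w) :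
    ∃ c1 c2 c3 : E →ₗ[F] F, (∀ x, x = c1 x • u + c2 x • v + c3 x • w) ∧
      c1 u = 1 ∧ c1 v = 0 ∧ c1 w = 0 ∧ c3 u = 0 ∧ c3 v = 0 ∧ c3 w = 1 := by
  have hli := I3_iff.1 h
  let B := basisOfLinearIndependentOfCardEqFinrank hli (by simp [hd])
  have hB : ∀ i, B i = ![u, v, w] i := by
    intro i; simp [B]
  have h0 : B 0 = u := hB 0
  have h1 : B 1 = v := hB 1
  have h2 : B 2 = w := hB 2
  refine ⟨B.coord 0, B.coord 1, B.coord 2, ?_, ?_⟩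
  · intro x
    have := B.sum_repr x
    rw [Fin.sum_univ_three, h0, h1, h2] at this
    simpa using this.symm
  · refine ⟨?_, ?_, ?_, ?_, ?_, ?_⟩ <;> simp only [← h0, ← h1, ← h2, Basis.coord_apply, Basis.repr_self] <;> simp

end LI

section Count
variable {F E : Type} [Field F] [Fintype F] [AddCommGroup E] [Module F E] {q : ℕ} {b : E → Prop}

theorem mem_xs {u w : E} {x : F} : x ∈ xs F b u w ↔ b (x • u + w) := by simp [xs]

theorem io_pos {v : E} (h : b v) : io b v = 1 := by simp [io, h]
theorem io_neg {v : E} (h : ¬ b v) : io b v = 0 := by simp [io, h]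

theorem xs_card (u w : E) : (xs F b u w).card = ∑ x : F, io b (x • u + w) := by
  simp [xs, io, Finset.sum_boole]

theorem Cfg.io_smul (C : Cfg F E q b) {c : F} (hc : c ≠ 0) (v : E) : io b (c • v) = io b v := by
  unfold io
  by_cases h : b v
  · rw [if_pos h, if_pos ((C.smul c hc v).2 h)]
  · rw [if_neg h, if_neg (fun h' => h ((C.smul c hc v).1 h'))]

theorem Cfg.sumF (C : Cfg F E q b) (g : F → ℕ) (k : ℕ) (h : ∀ x, x ≠ 0 → g x = k) :
    ∑ x, g x = g 0 + (q ^ 2 - 1) * k := by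
  classical
  rw [← Finset.add_sum_erase _ _ (Finset.mem_univ (0 : F))]
  congr 1
  rw [Finset.sum_congr rfl (g := fun _ => k)]
  · rw [Finset.sum_const, Finset.card_erase_of_mem (Finset.mem_univ _), Finset.card_univ, C.card, smul_eq_mul]
  · intro x hx; exact h x (Finset.ne_of_mem_erase hx)

theorem Cfg.line_count (C : Cfg F E q b) (u w : E) :
    ∑ β : F, ∑ α : F, io b (α • u + β • w) = (q ^ 2 - 1) * Nn F b u w := by
  rw [C.sumF _ (∑ x : F, io b (x • u + w))]
  · rw [C.sumF _ (io b u)]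
    · simp only [zero_smul, add_zero, Nn, xs_card]
      rw [io_neg C.b0]; ring
    · intro x hx; simp only [zero_smul, add_zero]; exact C.io_smul hx u
  · intro c hc
    rw [← Equiv.sum_comp (Equiv.mulLeft₀ c hc)]
    refine Finset.sum_congr rfl fun x _ => ?_
    rw [← C.io_smul hc (x • u + w)]
    congr 1
    change (c * x) • u + c • w = _
    module

theorem Cfg.plane_count (C : Cfg F E q b) (u v w : E) :
    ∑ γ : F, ∑ β : F, ∑ α : F, io b (α • u + β • v + γ • w)
      = (q ^ 2 - 1) * (Nn F b u v + ∑ y : F, (xs F b u (y • v + w)).card) := by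
  rw [C.sumF _ (∑ y : F, (xs F b u (y • v + w)).card)]
  · simp only [zero_smul, add_zero]
    rw [C.line_count u v]; ring
  · intro c hc
    rw [← Equiv.sum_comp (Equiv.mulLeft₀ c hc)]
    refine Finset.sum_congr rfl fun y _ => ?_
    rw [xs_card, ← Equiv.sum_comp (Equiv.mulLeft₀ c hc) (fun α => io b (α • u + _ + _))]
    refine Finset.sum_congr rfl fun x _ => ?_
    rw [← C.io_smul hc (x • u + (y • v + w))]
    congr 1
    change (c * x) • u + (c * y) • v + c • w = _
    module

theorem Cfg.Qpos (C : Cfg F E q b) : 0 < q ^ 2 - 1 := by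
  have := C.hq
  have : 9 ≤ q ^ 2 := by nlinarith
  omega

theorem Cfg.N_comm (C : Cfg F E q b) (u w : E) : Nn F b u w = Nn F b w u := by
  apply Nat.eq_of_mul_eq_mul_left C.Qpos
  rw [← C.line_count, ← C.line_count, Finset.sum_comm]
  refine Finset.sum_congr rfl fun x _ => Finset.sum_congr rfl fun y _ => ?_
  rw [add_comm]

theorem Cfg.N_shift (C : Cfg F E q b) (u w : E) (c : F) : Nn F b u (c • u + w) = Nn F b u w := by
  simp only [Nn, xs_card]
  congr 1
  rw [← Equiv.sum_comp (Equiv.addRight c) (fun x => io b (x • u + w))]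
  refine Finset.sum_congr rfl fun x _ => ?_
  congr 1
  simp only [Equiv.coe_addRight]; module

theorem Cfg.N_shift' (C : Cfg F E q b) (u w : E) (c : F) : Nn F b (c • u + w) u = Nn F b u w := by
  rw [C.N_comm, C.N_shift]

theorem Cfg.N_pos (C : Cfg F E q b) {u w : E} (h : I2 F u w) : 1 ≤ Nn F b u w := by
  by_contra h0
  have h0 : Nn F b u w = 0 := by omega
  have := C.N1 u w h
  rw [h0] at this; simp at this

theorem Cfg.N_ne (C : Cfg F E q b) {u w : E} (h : I2 F u w) : Nn F b u w ≠ q := by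
  intro h0
  have := C.N1 u w h
  rw [h0, C.qF] at this; simp at this

variable [Fintype E]

noncomputable def Mm {E : Type} [Fintype E] (b : E → Prop) : ℕ := ∑ v : E, io b v

theorem Cfg.pencil (C : Cfg F E q b) {u v w : E} (h : I3 F u v w) :
    Mm b = (q ^ 2 - 1) * (Nn F b u v + ∑ y : F, (xs F b u (y • v + w)).card) := by
  rw [← C.plane_count]
  have hli := I3_iff.1 h
  let B := basisOfLinearIndependentOfCardEqFinrank hli (by simp [C.dim])
  have hB : ∀ i, B i = ![u, v, w] i := by
    intro i; simp [B]
  rw [Mm, ← Equiv.sum_comp B.equivFun.symm.toEquiv]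
  have e1 : ∀ f : Fin 3 → F, B.equivFun.symm f = f 0 • u + f 1 • v + f 2 • w := by
    intro f
    rw [Basis.equivFun_symm_apply, Fin.sum_univ_three, hB, hB, hB]; rfl
  simp only [LinearEquiv.coe_toEquiv, e1]
  let φ : F × F × F ≃ (Fin 3 → F) :=
    { toFun := fun t => ![t.2.2, t.2.1, t.1]
      invFun := fun f => (f 2, f 1, f 0)
      left_inv := fun t => rfl
      right_inv := fun f => by ext i; fin_cases i <;> rfl }
  rw [← Equiv.sum_comp φ, Fintype.sum_prod_type]
  refine Finset.sum_congr rfl fun x _ => ?_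
  rw [Fintype.sum_prod_type]
  rfl

theorem Cfg.hank (C : Cfg F E q b) {u v w : E} (h : I3 F u v w) (hu : ¬ b u) :
    ∑ y : F, (Nn F b u w - Nn F b u (y • v + w)) ≤ Nn F b u w * (Nn F b u w - 1) := by
  have hN : ∀ w, Nn F b u w = (xs F b u w).card := by intro w; simp [Nn, io_neg hu]
  simp only [hN]
  have hle : (xs F b u w).card ≤ q + 1 := by rw [← hN]; exact C.le _ _ h.swap23.i2
  have hq := C.hq
  have hqq : 3 * q ≤ q ^ 2 := by nlinarith
  have hp : ∀ k, ∃ P : Polynomial F, k ≤ q ^ 2 - 2 → P.natDegree ≤ k ∧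
      (∀ y, P.eval y = ∑ x ∈ xs F b u (y • v + w), x ^ k) := by
    intro k
    by_cases hk : k ≤ q ^ 2 - 2
    · obtain ⟨P, h1, h2, _⟩ := C.pow u v w h k hk
      exact ⟨P, fun _ => ⟨h1, h2⟩⟩
    · exact ⟨0, fun h => absurd h hk⟩
  choose p hp using hp
  exact hankel_bound _ (fun y => xs F b u (y • v + w)) p (fun k hk => (hp k (by omega)).1)
    (fun k hk => (hp k (by omega)).2) 0 (by simp)

end Count

section Numbers
variable {F E : Type} [Field F] [Fintype F] [AddCommGroup E] [Module F E] {q : ℕ} {b : E → Prop}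

theorem I2.shift {u w : E} (h : I2 F u w) (x : F) : I2 F (x • u + w) u := by
  intro a c hac
  have := h (a * x + c) a (by rw [← hac]; module)
  refine ⟨this.2, ?_⟩
  have h1 := this.1
  rw [this.2] at h1; simpa using h1

theorem I3.shift {u v w : E} (h : I3 F u v w) (y : F) : I3 F u (y • v + w) v := by
  intro a c d hac
  have := h a (c * y + d) c (by rw [← hac]; module)
  refine ⟨this.1, this.2.2, ?_⟩
  have h1 := this.2.1
  rw [this.2.2] at h1; simpa using h1

theorem Cfg.off (C : Cfg F E q b) {u w : E} (h : I2 F u w) :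
    ∃ u' w', I2 F u' w' ∧ ¬ b u' ∧ Nn F b u' w' = Nn F b u w := by
  by_cases hu : b u
  · have hlt : (xs F b u w).card < (Finset.univ : Finset F).card := by
      rw [Finset.card_univ, C.card]
      have h1 := C.le u w h
      rw [Nn, io_pos hu] at h1
      nlinarith [C.hq]
    obtain ⟨x, _, hx⟩ := Finset.exists_mem_notMem_of_card_lt_card hlt
    rw [mem_xs] at hx
    exact ⟨x • u + w, u, h.shift x, hx, C.N_shift' u w x⟩
  · exact ⟨u, w, h, hu, rfl⟩

theorem Cfg.onp (C : Cfg F E q b) {u w : E} (h : I2 F u w) :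
    ∃ u' w', I2 F u' w' ∧ b u' ∧ Nn F b u' w' = Nn F b u w := by
  by_cases hu : b u
  · exact ⟨u, w, h, hu, rfl⟩
  · have h1 := C.N_pos h
    rw [Nn, io_neg hu] at h1
    have : 0 < (xs F b u w).card := by omega
    obtain ⟨x, hx⟩ := Finset.card_pos.1 this
    rw [mem_xs] at hx
    exact ⟨x • u + w, u, h.shift x, hx, C.N_shift' u w x⟩

theorem Cfg.exI2 (C : Cfg F E q b) : ∃ u w : E, I2 F u w := by
  have : Nontrivial E := by
    apply Module.nontrivial_of_finrank_pos (R := F); rw [C.dim]; norm_num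
  obtain ⟨u, hu⟩ := exists_ne (0 : E)
  obtain ⟨w, hw⟩ := exists_ext1 C.dim hu
  exact ⟨u, w, hw⟩

variable [Fintype E]

/-- number of points -/
theorem Cfg.exn (C : Cfg F E q b) : ∃ n, Mm b = (q ^ 2 - 1) * n ∧ ∀ u v w : E, I3 F u v w →
    n = Nn F b u v + ∑ y : F, (xs F b u (y • v + w)).card := by
  obtain ⟨u, w, h⟩ := C.exI2
  obtain ⟨v, hv⟩ := exists_ext2 C.dim h
  refine ⟨_, C.pencil hv, ?_⟩
  intro u' v' w' h'
  apply Nat.eq_of_mul_eq_mul_left C.Qpos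
  rw [← C.pencil hv, ← C.pencil h']

theorem Cfg.lower (C : Cfg F E q b) {u v w : E} (h : I3 F u v w) (hu : ¬ b u) {m n : ℕ}
    (hm : Nn F b u w = m)
    (hn : n = Nn F b u v + ∑ y : F, (xs F b u (y • v + w)).card) :
    q ^ 2 * m + Nn F b u v ≤ n + m * (m - 1) := by
  have hN : ∀ w, Nn F b u w = (xs F b u w).card := by intro w; simp [Nn, io_neg hu]
  have h1 := C.hank h hu
  rw [hm] at h1
  have h2 : ∑ y : F, m ≤ ∑ y : F, (m - Nn F b u (y • v + w)) + ∑ y : F, (xs F b u (y • v + w)).card := by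
    rw [← Finset.sum_add_distrib]
    apply Finset.sum_le_sum
    intro y _
    rw [← hN]; omega
  rw [Finset.sum_const, Finset.card_univ, C.card, smul_eq_mul] at h2
  omega

theorem Cfg.max (C : Cfg F E q b) : ∃ u w : E, I2 F u w ∧ ¬ b u ∧ Nn F b u w = q + 1 := by
  classical
  obtain ⟨n, -, hn⟩ := C.exn
  obtain ⟨u0, w0, h0⟩ := C.exI2
  obtain ⟨⟨u1, w1⟩, hm1, hmax⟩ := Finset.exists_max_image
    (Finset.univ.filter (fun t : E × E => I2 F t.1 t.2)) (fun t => Nn F b t.1 t.2)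
    ⟨(u0, w0), by simpa using h0⟩
  simp only [Finset.mem_filter, Finset.mem_univ, true_and, Prod.forall] at hm1 hmax
  have hmle : Nn F b u1 w1 ≤ q + 1 := C.le _ _ hm1
  have hmpos : 1 ≤ Nn F b u1 w1 := C.N_pos hm1
  obtain ⟨u, w, h, hu, hN⟩ := C.off hm1
  generalize Nn F b u1 w1 = m at *
  obtain ⟨v, hv⟩ := exists_ext2 C.dim h
  have hlow := C.lower hv.swap23 hu hN (hn _ _ _ hv.swap23)
  have hp := C.N_pos hv.swap23.i2
  obtain ⟨P, w2, h2, hP, -⟩ := C.onp h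
  obtain ⟨v2, hv2⟩ := exists_ext2 C.dim h2
  have hn2 := hn _ _ _ hv2
  have hup : ∑ y : F, (xs F b P (y • w2 + v2)).card ≤ ∑ y : F, (m - 1) := by
    apply Finset.sum_le_sum
    intro y _
    have := hmax _ _ (hv2.i2y y)
    rw [Nn, io_pos hP] at this
    omega
  rw [Finset.sum_const, Finset.card_univ, C.card, smul_eq_mul] at hup
  have h3 := hmax _ _ h2
  obtain ⟨m', hm'⟩ : ∃ m', m = m' + 1 := ⟨m - 1, by omega⟩
  refine ⟨u, w, h, hu, ?_⟩
  rw [hN]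
  refine le_antisymm hmle ?_
  by_contra hlt
  have hlt : m ≤ q := by omega
  subst hm'
  simp only [Nat.add_sub_cancel] at hlow hup
  have hsq : (m' + 1) * (m' + 1) ≤ q ^ 2 := by nlinarith
  nlinarith

theorem Cfg.nlow (C : Cfg F E q b) : ∃ n, Mm b = (q ^ 2 - 1) * n ∧ q ^ 3 + 1 ≤ n ∧
   ∀ u v w : E, I3 F u v w → n = Nn F b u v + ∑ y : F, (xs F b u (y • v + w)).card := by
  obtain ⟨n, hM, hn⟩ := C.exn
  refine ⟨n, hM, ?_, hn⟩
  obtain ⟨u, w, h, hu, hN⟩ := C.max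
  have hq := C.hq
  by_cases hex : ∃ v, I3 F u v w ∧ Nn F b u v = q + 1
  · obtain ⟨v, hv, hNv⟩ := hex
    have hlow := C.lower hv hu hN (hn _ _ _ hv)
    rw [hNv] at hlow
    simp only [Nat.add_sub_cancel] at hlow
    nlinarith
  · exfalso
    push Not at hex
    obtain ⟨v, hv⟩ := exists_ext2 C.dim h
    have hlow := C.lower hv.swap23 hu hN (hn _ _ _ hv.swap23)
    have hp := C.N_pos hv.swap23.i2
    have hn2 := hn _ _ _ hv
    have hup : ∑ y : F, (xs F b u (y • w + v)).card ≤ ∑ y : F, (q - 1) := by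
      apply Finset.sum_le_sum
      intro y _
      have h1 := hex _ (hv.shift y)
      have h2 := C.N_ne (hv.i2y y)
      have h3 := C.le _ _ (hv.i2y y)
      rw [Nn, io_neg hu] at h1 h2 h3
      omega
    rw [Finset.sum_const, Finset.card_univ, C.card, smul_eq_mul] at hup
    rw [hN] at hn2
    obtain ⟨s, hs⟩ : ∃ s, q = s + 3 := ⟨q - 3, by omega⟩
    subst hs
    simp only [Nat.add_sub_cancel, show s + 3 - 1 = s + 2 by omega] at *
    nlinarith

open Classical in
theorem sum_split (u : E) (hu : u ≠ 0) (f : E → ℤ) :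
    ∑ w, f w = (∑ w, if I2 F u w then f w else 0) + ∑ c : F, f (c • u) := by
  have h1 : ∑ w, f w = (∑ w, if I2 F u w then f w else 0) + ∑ w, if ¬ I2 F u w then f w else 0 := by
    rw [← Finset.sum_add_distrib]
    refine Finset.sum_congr rfl fun w _ => ?_
    by_cases h : I2 F u w <;> simp [h]
  rw [h1]
  congr 1
  rw [← Finset.sum_filter]
  symm
  refine Finset.sum_bij (fun c _ => c • u) ?_ ?_ ?_ ?_
  · intro c _
    simp only [Finset.mem_filter, Finset.mem_univ, true_and]
    intro h
    have := (h c (-1) (by module)).2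
    simp at this
  · intro a _ c _ hac
    exact smul_left_injective F hu hac
  · intro w hw
    simp only [Finset.mem_filter, Finset.mem_univ, true_and, I2, not_forall] at hw
    obtain ⟨a, c, hac, hn⟩ := hw
    have hc : c ≠ 0 := by
      rintro rfl
      simp only [zero_smul, add_zero, smul_eq_zero, hu, or_false] at hac
      exact hn ⟨hac, rfl⟩
    refine ⟨-c⁻¹ * a, Finset.mem_univ _, ?_⟩
    have : c • w = - (a • u) := by rw [eq_neg_iff_add_eq_zero, add_comm]; exact hac
    calc (-c⁻¹ * a) • u = c⁻¹ • (-(a • u)) := by module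
      _ = c⁻¹ • c • w := by rw [this]
      _ = w := by rw [smul_smul, inv_mul_cancel₀ hc, one_smul]
  · intros; rfl

def shiftEquiv (x : F) : E × E ≃ E × E where
  toFun t := (x • t.1 + t.2, t.1)
  invFun t := (t.2, t.1 - x • t.2)
  left_inv t := by ext <;> simp
  right_inv t := by ext <;> simp

theorem I2.shift_iff {u w : E} (x : F) : I2 F (x • u + w) u ↔ I2 F u w := by
  refine ⟨fun h => ?_, fun h => h.shift x⟩
  have := h.symm.shift (-x)
  have e : -x • u + (x • u + w) = w := by module
  rw [e] at this
  exact this.symm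

open Classical in
theorem Cfg.double (C : Cfg F E q b) (g : ℕ → ℤ) :
    ∑ u : E, ∑ w : E, (if I2 F u w then (Nn F b u w : ℤ) * g (Nn F b u w) else 0) =
    ((q : ℤ) ^ 2 + 1) * ∑ u : E, (io b u : ℤ) * ∑ w : E, (if I2 F u w then g (Nn F b u w) else 0) := by
  set T := ∑ u : E, (io b u : ℤ) * ∑ w : E, (if I2 F u w then g (Nn F b u w) else 0) with hT
  have key : ∀ x : F, ∑ u : E, ∑ w : E, (if I2 F u w then (io b (x • u + w) : ℤ) * g (Nn F b u w) else 0)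
      = T := by
    intro x
    rw [hT]
    simp only [Finset.mul_sum]
    rw [← Fintype.sum_prod_type', ← Fintype.sum_prod_type']
    symm
    rw [← Equiv.sum_comp (shiftEquiv (E := E) x)]
    refine Finset.sum_congr rfl fun t _ => ?_
    simp only [shiftEquiv, Equiv.coe_fn_mk, I2.shift_iff, C.N_shift', mul_ite, mul_zero]
  have h2 : ∀ u w : E, (if I2 F u w then (Nn F b u w : ℤ) * g (Nn F b u w) else 0) =
      (io b u : ℤ) * (if I2 F u w then g (Nn F b u w) else 0) +
      ∑ x : F, (if I2 F u w then (io b (x • u + w) : ℤ) * g (Nn F b u w) else 0) := by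
    intro u w
    by_cases h : I2 F u w
    · simp only [h, if_true]
      rw [← Finset.sum_mul, ← add_mul]
      congr 1
      rw [Nn, xs_card]; push_cast; rfl
    · simp [h]
  simp only [h2, Finset.sum_add_distrib]
  have h3 : ∑ u : E, ∑ w : E, ∑ x : F, (if I2 F u w then (io b (x • u + w) : ℤ) * g (Nn F b u w) else 0)
      = ((q : ℤ) ^ 2) * T := by
    have : ∑ x : F, ∑ u : E, ∑ w : E, (if I2 F u w then (io b (x • u + w) : ℤ) * g (Nn F b u w) else 0)
      = ((q : ℤ) ^ 2) * T := by
      simp only [key]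
      rw [Finset.sum_const, Finset.card_univ, C.card]; simp
    rw [← this, Finset.sum_comm]
    conv_rhs => rw [Finset.sum_comm]
    rw [Finset.sum_comm]
    refine Finset.sum_congr rfl fun u _ => ?_
    rw [Finset.sum_comm]
  rw [h3]
  simp only [← Finset.mul_sum]
  rw [← hT]; ring

theorem Cfg.cardE (C : Cfg F E q b) : (Fintype.card E : ℤ) = ((q : ℤ) ^ 2) ^ 3 := by
  have : FiniteDimensional F E := Module.finite_of_finrank_pos (by rw [C.dim]; norm_num)
  have := Module.card_eq_pow_finrank (K := F) (V := E)
  rw [this, C.dim, C.card]; push_cast; ring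

open Classical in
theorem Cfg.cnt1 (C : Cfg F E q b) {u : E} (hu : u ≠ 0) :
    (∑ w : E, if I2 F u w then (1 : ℤ) else 0) = ((q : ℤ) ^ 2) ^ 3 - (q : ℤ) ^ 2 := by
  have := sum_split (F := F) u hu (fun _ => 1)
  simp only [Finset.sum_const, Finset.card_univ, C.card] at this
  have h2 := C.cardE
  push_cast [nsmul_eq_mul] at this
  linarith

open Classical in
theorem Cfg.cnt2 (C : Cfg F E q b) {u : E} (hu : b u) :
    (∑ w : E, if I2 F u w then (Nn F b u w : ℤ) else 0) =
      (((q : ℤ) ^ 2) ^ 3 - (q : ℤ) ^ 2) + (q : ℤ) ^ 2 * ((Mm b : ℤ) - ((q : ℤ) ^ 2 - 1)) := by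
  have hu0 : u ≠ 0 := by rintro rfl; exact C.b0 hu
  have h0 : (∑ w : E, if I2 F u w then (io b w : ℤ) else 0) = (Mm b : ℤ) - ((q : ℤ) ^ 2 - 1) := by
    have := sum_split (F := F) u hu0 (fun w => (io b w : ℤ))
    have h1 : ∑ c : F, (io b (c • u) : ℤ) = (q : ℤ) ^ 2 - 1 := by
      have := C.sumF (fun c => io b (c • u)) 1 (fun c hc => by
        rw [C.io_smul hc, io_pos hu])
      rw [zero_smul, io_neg C.b0] at this
      have h9 : 1 ≤ q ^ 2 := by nlinarith [C.hq]
      zify [h9] at this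
      rw [this]; ring
    rw [h1] at this
    rw [Mm]; push_cast
    linarith
  have h2 : ∀ w : E, (if I2 F u w then (Nn F b u w : ℤ) else 0) = (if I2 F u w then (1 : ℤ) else 0) +
      ∑ x : F, (if I2 F u w then (io b (x • u + w) : ℤ) else 0) := by
    intro w
    by_cases h : I2 F u w
    · simp only [h, if_true]
      rw [Nn, xs_card, io_pos hu]; push_cast; rfl
    · simp [h]
  simp only [h2, Finset.sum_add_distrib]
  rw [C.cnt1 hu0, Finset.sum_comm]
  congr 1
  have h3 : ∀ x : F, (∑ w : E, if I2 F u w then (io b (x • u + w) : ℤ) else 0)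
      = (Mm b : ℤ) - ((q : ℤ) ^ 2 - 1) := by
    intro x
    rw [← h0, ← Equiv.sum_comp (Equiv.addLeft (x • u)) (fun w => if I2 F u w then (io b w : ℤ) else 0)]
    refine Finset.sum_congr rfl fun w _ => ?_
    simp only [Equiv.coe_addLeft]
    have : I2 F u (x • u + w) ↔ I2 F u w := ⟨fun h => (I2.shift_iff x).1 h.symm, fun h => (h.shift x).symm⟩
    simp only [this]
  simp only [h3]
  rw [Finset.sum_const, Finset.card_univ, C.card]; simp

open Classical in
theorem Cfg.unital (C : Cfg F E q b) : Mm b = (q ^ 2 - 1) * (q ^ 3 + 1) ∧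
    (∀ u w : E, I2 F u w → Nn F b u w = 1 ∨ Nn F b u w = q + 1) ∧
    ∀ u v w : E, I3 F u v w → q ^ 3 + 1 = Nn F b u v + ∑ y : F, (xs F b u (y • v + w)).card := by
  obtain ⟨n, hM, hlow, hn⟩ := C.nlow
  have hq := C.hq
  have hMz : (Mm b : ℤ) = ((q : ℤ) ^ 2 - 1) * n := by
    have h9 : 1 ≤ q ^ 2 := by nlinarith [C.hq]
    rw [hM]; push_cast [Nat.cast_sub h9]; ring
  have P0 : ∑ u : E, ∑ w : E, (if I2 F u w then (1 : ℤ) else 0) =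
      (((q : ℤ) ^ 2) ^ 3 - 1) * (((q : ℤ) ^ 2) ^ 3 - (q : ℤ) ^ 2) := by
    rw [← Finset.add_sum_erase _ _ (Finset.mem_univ (0 : E))]
    have h0 : ∀ w : E, ¬ I2 F 0 w := fun w h => h.ne rfl
    simp only [h0, if_false, Finset.sum_const_zero, zero_add]
    rw [Finset.sum_congr rfl (fun u hu => C.cnt1 (Finset.ne_of_mem_erase hu)), Finset.sum_const,
      Finset.card_erase_of_mem (Finset.mem_univ _), Finset.card_univ, nsmul_eq_mul]
    congr 1
    have := C.cardE
    have hpos : 1 ≤ Fintype.card E := Fintype.card_pos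
    push_cast [Nat.cast_sub hpos]; linarith
  have hio : ∀ (f : E → ℤ) (K : ℤ), (∀ u, b u → f u = K) → ∑ u : E, (io b u : ℤ) * f u = (Mm b : ℤ) * K := by
    intro f K hf
    rw [Mm]; push_cast; rw [Finset.sum_mul]
    refine Finset.sum_congr rfl fun u _ => ?_
    by_cases hu : b u
    · rw [hf u hu]
    · simp [io_neg hu]
  have S1 := C.double (fun _ => 1)
  rw [hio _ (((q : ℤ) ^ 2) ^ 3 - (q : ℤ) ^ 2) (fun u hu => C.cnt1 (by rintro rfl; exact C.b0 hu))] at S1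
  have S2 := C.double (fun n => (n : ℤ))
  rw [hio _ _ (fun u hu => C.cnt2 hu)] at S2
  have tot : ∑ u : E, ∑ w : E, (if I2 F u w then ((Nn F b u w : ℤ) - 1) * ((q : ℤ) + 1 - Nn F b u w) else 0)
      = (q + 2) * ∑ u : E, ∑ w : E, (if I2 F u w then (Nn F b u w : ℤ) * 1 else 0)
        - (q + 1) * ∑ u : E, ∑ w : E, (if I2 F u w then (1 : ℤ) else 0)
        - ∑ u : E, ∑ w : E, (if I2 F u w then (Nn F b u w : ℤ) * (Nn F b u w) else 0) := by
    simp only [Finset.mul_sum, ← Finset.sum_sub_distrib]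
    refine Finset.sum_congr rfl fun u _ => Finset.sum_congr rfl fun w _ => ?_
    by_cases h : I2 F u w
    · simp only [h, if_true]; ring
    · simp [h]
  have hnn : ∀ u w : E, 0 ≤ (if I2 F u w then ((Nn F b u w : ℤ) - 1) * ((q : ℤ) + 1 - Nn F b u w) else 0) := by
    intro u w
    by_cases h : I2 F u w
    · simp only [h, if_true]
      have h1 := C.N_pos h
      have h2 := C.le _ _ h
      apply mul_nonneg <;> [skip; skip] <;> (zify at h1 h2; linarith)
    · simp [h]
  have hpos : 0 ≤ ∑ u : E, ∑ w : E, (if I2 F u w then ((Nn F b u w : ℤ) - 1) * ((q : ℤ) + 1 - Nn F b u w) else 0) :=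
    Finset.sum_nonneg fun u _ => Finset.sum_nonneg fun w _ => hnn u w
  rw [S1, P0, S2, hMz] at tot
  have fac : ∑ u : E, ∑ w : E, (if I2 F u w then ((Nn F b u w : ℤ) - 1) * ((q : ℤ) + 1 - Nn F b u w) else 0)
      = - (((q : ℤ) ^ 2 * ((q : ℤ) ^ 2 - 1) ^ 2 * ((q : ℤ) ^ 2 + 1)) * ((n : ℤ) - q ^ 3 - 1) * (n - q ^ 2 - q - 1)) := by
    rw [tot]; ring
  have hqz : (3 : ℤ) ≤ q := by exact_mod_cast hq
  have hlowz : (q : ℤ) ^ 3 + 1 ≤ n := by exact_mod_cast hlow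
  have hB : 0 < (n : ℤ) - q ^ 2 - q - 1 := by nlinarith
  have hK : 0 < ((q : ℤ) ^ 2 * ((q : ℤ) ^ 2 - 1) ^ 2 * ((q : ℤ) ^ 2 + 1)) := by
    have : 0 < (q : ℤ) ^ 2 - 1 := by nlinarith
    positivity
  have hneq : (n : ℤ) - q ^ 3 - 1 = 0 := by
    by_contra hne
    have h3 : 0 < (n : ℤ) - q ^ 3 - 1 := lt_of_le_of_ne (by linarith) (Ne.symm hne)
    have := mul_pos (mul_pos hK h3) hB
    linarith
  have hneq' : n = q ^ 3 + 1 := by zify; linarith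
  subst hneq'
  refine ⟨hM, ?_, hn⟩
  rw [hneq] at fac
  simp only [mul_zero, zero_mul, neg_zero] at fac
  intro u w h
  have h1 := (Finset.sum_eq_zero_iff_of_nonneg (fun u _ => Finset.sum_nonneg fun w _ => hnn u w)).1 fac u (Finset.mem_univ _)
  have h2 := (Finset.sum_eq_zero_iff_of_nonneg (fun w _ => hnn u w)).1 h1 w (Finset.mem_univ _)
  simp only [h, if_true] at h2
  rcases mul_eq_zero.1 h2 with h3 | h3
  · left; zify; linarith
  · right; zify; linarith

end Numbers

section Polar
variable {F E : Type} [Field F] [Fintype F] [AddCommGroup E] [Module F E] {q : ℕ} {b : E → Prop}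

theorem xs_shift (R S : E) (c : F) (x : F) : x ∈ xs F b R (c • R + S) ↔ x + c ∈ xs F b R S := by
  rw [mem_xs, mem_xs]
  have : x • R + (c • R + S) = (x + c) • R + S := by module
  rw [this]

theorem xs_shift_sum (R S : E) (c : F) (g : F → F) :
    ∑ x ∈ xs F b R (c • R + S), g x = ∑ x ∈ xs F b R S, g (x - c) := by
  refine Finset.sum_bij (fun x _ => x + c) ?_ ?_ ?_ ?_
  · intro x hx; exact (xs_shift _ _ _ _).1 hx
  · intro x _ y _ h; exact add_right_cancel h
  · intro x hx; exact ⟨x - c, (xs_shift _ _ _ _).2 (by simpa using hx), by simp⟩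
  · intro x _; simp

theorem Cfg.xs_smul (C : Cfg F E q b) (R S : E) {c : F} (hc : c ≠ 0) (x : F) :
    c * x ∈ xs F b R (c • S) ↔ x ∈ xs F b R S := by
  rw [mem_xs, mem_xs, ← C.smul c hc (x • R + S)]
  have : (c * x) • R + c • S = c • (x • R + S) := by module
  rw [this]

theorem Cfg.xs_smul_sum (C : Cfg F E q b) (R S : E) {c : F} (hc : c ≠ 0) (g : F → F) :
    ∑ x ∈ xs F b R (c • S), g x = ∑ x ∈ xs F b R S, g (c * x) := by
  symm
  refine Finset.sum_bij (fun x _ => c * x) ?_ ?_ ?_ ?_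
  · intro x hx; exact (C.xs_smul _ _ hc _).2 hx
  · intro x _ y _ h; exact mul_left_cancel₀ hc h
  · intro x hx
    refine ⟨c⁻¹ * x, (C.xs_smul R S hc _).1 ?_, mul_inv_cancel_left₀ hc x⟩
    rwa [mul_inv_cancel_left₀ hc x]
  · intro x _; rfl

theorem Cfg.xs_smul_card (C : Cfg F E q b) (R S : E) {c : F} (hc : c ≠ 0) :
    (xs F b R (c • S)).card = (xs F b R S).card := by
  symm
  refine Finset.card_bij (fun x _ => c * x) ?_ ?_ ?_
  · intro x hx; exact (C.xs_smul _ _ hc _).2 hx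
  · intro x _ y _ h; exact mul_left_cancel₀ hc h
  · intro x hx
    refine ⟨c⁻¹ * x, (C.xs_smul R S hc _).1 ?_, mul_inv_cancel_left₀ hc x⟩
    rwa [mul_inv_cancel_left₀ hc x]

/-- swapping the two base points, sum of inverses -/
theorem Cfg.xs_inv_sum (C : Cfg F E q b) (R S : E) (hR : ¬ b R) (hS : ¬ b S) :
    ∑ x ∈ xs F b S R, x = ∑ x ∈ xs F b R S, x⁻¹ := by
  have key : ∀ R S : E, ¬ b R → ∀ x ∈ xs F b S R, x⁻¹ ∈ xs F b R S ∧ x ≠ 0 := by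
    intro R S hR x hx
    have hx0 : x ≠ 0 := by
      rintro rfl; rw [mem_xs] at hx; simp at hx; exact hR hx
    refine ⟨?_, hx0⟩
    rw [mem_xs] at hx ⊢
    rw [← C.smul x hx0]
    have : x • (x⁻¹ • R + S) = x • S + R := by
      rw [smul_add, smul_smul, mul_inv_cancel₀ hx0, one_smul, add_comm]
    rwa [this]
  refine Finset.sum_bij (fun x _ => x⁻¹) ?_ ?_ ?_ ?_
  · intro x hx; exact (key R S hR x hx).1
  · intro x _ y _ h; exact inv_injective h
  · intro x hx; exact ⟨x⁻¹, (key S R hS x hx).1, inv_inv x⟩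
  · intro x _; simp

variable [Fintype E]

theorem Cfg.UT (C : Cfg F E q b) {P v w : E} (hP : b P) (h : I3 F P v w)
    (hv : Nn F b P v = 1) (hw : Nn F b P w = 1) : False := by
  classical
  have hn := C.unital.2.2 _ _ _ h
  have hq := C.hq
  rw [hv, ← Finset.add_sum_erase _ _ (Finset.mem_univ (0 : F))] at hn
  have h0 : (xs F b P ((0 : F) • v + w)).card = 0 := by
    rw [zero_smul, zero_add]; rw [Nn, io_pos hP] at hw; omega
  rw [h0] at hn
  have hup : ∑ y ∈ Finset.univ.erase (0 : F), (xs F b P (y • v + w)).card ≤ ∑ y ∈ Finset.univ.erase (0 : F), q := by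
    apply Finset.sum_le_sum
    intro y _
    have := C.le _ _ (h.i2y y)
    rw [Nn, io_pos hP] at this
    omega
  rw [Finset.sum_const, Finset.card_erase_of_mem (Finset.mem_univ _), Finset.card_univ, C.card, smul_eq_mul] at hup
  have : (q ^ 2 - 1) * q = q ^ 3 - q := by
    rw [Nat.sub_mul, one_mul]; rfl
  have h3 : q ≤ q ^ 3 := Nat.le_self_pow (by norm_num) q
  omega

theorem Cfg.exTan (C : Cfg F E q b) {R : E} (hR : R ≠ 0) : ∃ v, I2 F R v ∧ Nn F b R v = 1 := by
  by_contra hcon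
  push Not at hcon
  obtain ⟨v, hv⟩ := exists_ext1 C.dim hR
  obtain ⟨w, hw⟩ := exists_ext2 C.dim hv
  have hN : ∀ v, I2 F R v → Nn F b R v = q + 1 := by
    intro v hv
    rcases C.unital.2.1 R v hv with h | h
    · exact absurd h (hcon v hv)
    · exact h
  have hn := C.unital.2.2 _ _ _ hw
  have hq := C.hq
  rw [hN v hv] at hn
  have hc : ∀ y : F, (xs F b R (y • v + w)).card = q + 1 - io b R := by
    intro y
    have := hN _ (hw.i2y y)
    rw [Nn] at this
    omega
  simp only [hc] at hn
  rw [Finset.sum_const, Finset.card_univ, C.card, smul_eq_mul] at hn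
  have hio : io b R ≤ 1 := by unfold io; split_ifs <;> simp
  have : q ≤ q + 1 - io b R := by omega
  nlinarith

open Classical in
theorem Cfg.cardT (C : Cfg F E q b) {R v w : E} (hR : ¬ b R) (h : I3 F R v w) (hv : Nn F b R v = 1) :
    (Finset.univ.filter (fun y : F => (xs F b R (y • v + w)).card = 1)).card = q := by
  have hn := C.unital.2.2 _ _ _ h
  have hq := C.hq
  rw [hv] at hn
  have hc : ∀ y : F, (xs F b R (y • v + w)).card + (if (xs F b R (y • v + w)).card = 1 then q else 0) = q + 1 := by
    intro y
    have := C.unital.2.1 _ _ (h.i2y y)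
    rw [Nn, io_neg hR] at this
    split_ifs with h1
    · omega
    · omega
  have h2 := Finset.sum_congr rfl (fun y (_ : y ∈ (Finset.univ : Finset F)) => hc y)
  rw [Finset.sum_add_distrib, ← Finset.sum_filter, Finset.sum_const, Finset.sum_const, Finset.card_univ,
    C.card, smul_eq_mul, smul_eq_mul] at h2
  set t := (Finset.univ.filter (fun y : F => (xs F b R (y • v + w)).card = 1)).card
  have h4 : t * q = q * q := by nlinarith
  exact Nat.eq_of_mul_eq_mul_right (by omega) h4

theorem foot {R v : E} (h : (xs F b R v).card = 1) : ∃ c : F, xs F b R (c • R + v) = {0} := by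
  obtain ⟨c, hc⟩ := Finset.card_eq_one.1 h
  refine ⟨c, ?_⟩
  ext x
  rw [xs_shift, hc]; simp

theorem Cfg.feet (C : Cfg F E q b) {R : E} (hb : ¬ b R) (hR : R ≠ 0) :
    ∃ P1 P2, I3 F R P1 P2 ∧ xs F b R P1 = {0} ∧ xs F b R P2 = {0} := by
  classical
  obtain ⟨v, hv, hN⟩ := C.exTan hR
  obtain ⟨c, hc⟩ := foot (R := R) (v := v) (F := F) (b := b) (by rw [Nn, io_neg hb] at hN; omega)
  have h1 : I2 F R (c • R + v) := (hv.shift c).symm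
  obtain ⟨w, hw⟩ := exists_ext2 C.dim h1
  have hN1 : Nn F b R (c • R + v) = 1 := by rw [C.N_shift]; exact hN
  have hT := C.cardT hb hw hN1
  have : 0 < (Finset.univ.filter (fun y : F => (xs F b R (y • (c • R + v) + w)).card = 1)).card := by
    rw [hT]; have := C.hq; omega
  obtain ⟨y, hy⟩ := Finset.card_pos.1 this
  simp only [Finset.mem_filter, Finset.mem_univ, true_and] at hy
  obtain ⟨d, hd⟩ := foot hy
  refine ⟨c • R + v, d • R + (y • (c • R + v) + w), ?_, hc, hd⟩
  intro a1 a2 a3 h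
  have := hw (a1 + a3 * d) (a2 + a3 * y) a3 (by rw [← h]; module)
  obtain ⟨e1, e2, e3⟩ := this
  subst e3
  simp at e1 e2
  exact ⟨e1, e2, rfl⟩

open Polynomial in
theorem Cfg.core (C : Cfg F E q b) {R P1 P2 : E} (hb : ¬ b R) (h : I3 F R P1 P2)
    (h1 : xs F b R P1 = {0}) (h2 : xs F b R P2 = {0}) :
    ∃ e : F, ∀ y : F, ∑ x ∈ xs F b R (y • P1 + P2), x = 0 ∧
      ((xs F b R (y • P1 + P2)).card = 1 → xs F b R (y • P1 + P2) = {0}) ∧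
      ((xs F b R (y • P1 + P2)).card ≠ 1 → 0 ∉ xs F b R (y • P1 + P2) ∧
        ∑ x ∈ xs F b R (y • P1 + P2), x⁻¹ = e) := by
  classical
  have hq := C.hq
  have hqq : 3 * q ≤ q ^ 2 := by nlinarith
  have hp : ∀ k, ∃ P : F[X], 1 ≤ k → k ≤ q ^ 2 - 2 → P.natDegree ≤ k - 1 ∧
      (∀ y, P.eval y = ∑ x ∈ xs F b R (y • P1 + P2), x ^ k) := by
    intro k
    by_cases hk : 1 ≤ k ∧ k ≤ q ^ 2 - 2
    · obtain ⟨P, g1, g2, g3⟩ := C.pow R P1 P2 h k hk.2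
      refine ⟨P, fun _ _ => ⟨?_, g2⟩⟩
      rw [h1, Finset.sum_singleton, zero_pow (by omega)] at g3
      rw [Polynomial.natDegree_le_iff_coeff_eq_zero]
      intro N hN
      rcases Nat.lt_or_ge k N with h' | h'
      · exact Polynomial.coeff_eq_zero_of_natDegree_lt (by omega)
      · have : N = k := by omega
        rw [this]; exact g3
    · exact ⟨0, fun a b => absurd ⟨a, b⟩ hk⟩
  choose p hp using hp
  have hsum : ∀ y : F, ∑ x ∈ xs F b R (y • P1 + P2), x = 0 := by
    have := hp 1 le_rfl (by omega)
    have hc := Polynomial.eq_C_of_natDegree_le_zero this.1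
    have e0 := this.2 0
    rw [zero_smul, zero_add, h2] at e0
    intro y
    have ey := this.2 y
    rw [hc, Polynomial.eval_C] at ey e0
    simp only [pow_one, Finset.sum_singleton] at ey e0
    rw [← ey, e0]
  have hT1 : ∀ y : F, (xs F b R (y • P1 + P2)).card = 1 → xs F b R (y • P1 + P2) = {0} := by
    intro y hy
    obtain ⟨x, hx⟩ := Finset.card_eq_one.1 hy
    have := hsum y
    rw [hx, Finset.sum_singleton] at this
    rw [hx, this]
  have hN1 : Nn F b R P1 = 1 := by rw [Nn, io_neg hb, h1]; rfl
  have hbP : ∀ y : F, (xs F b R (y • P1 + P2)).card = 1 → b (y • P1 + P2) := by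
    intro y hy
    have h0 : (0 : F) ∈ xs F b R (y • P1 + P2) := by rw [hT1 y hy]; simp
    rw [mem_xs, zero_smul, zero_add] at h0
    exact h0
  obtain ⟨e, he⟩ := lemA q hq C.card C.qF (fun y => xs F b R (y • P1 + P2))
    (Finset.univ.filter (fun y : F => (xs F b R (y • P1 + P2)).card = 1)) (C.cardT hb h hN1)
    (by
      intro y hy
      simp only [Finset.mem_filter, Finset.mem_univ, true_and] at hy
      exact hT1 y hy)
    (by
      intro y hy
      simp only [Finset.mem_filter, Finset.mem_univ, true_and] at hy
      have := C.unital.2.1 _ _ (h.i2y y)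
      rw [Nn, io_neg hb] at this
      omega)
    p (fun k a c => (hp k a c).1) (fun k a c => (hp k a c).2)
    (by
      have : (Finset.univ.filter fun y : F => (0 : F) ∈ xs F b R (y • P1 + P2)) = xs F b P1 P2 := by
        ext y
        simp only [Finset.mem_filter, Finset.mem_univ, true_and, mem_xs, zero_smul, zero_add]
      rw [this]
      have h12 : I2 F P1 P2 := h.swap12.swap23.i2
      have := C.le _ _ h12
      rw [Nn] at this
      omega)
    (by
      intro l hl y0 hy0
      simp only [Finset.mem_filter, Finset.mem_univ, true_and] at hy0
      have hnb : ¬ b (l • R + P1) := by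
        intro hbl
        have : l ∈ xs F b R P1 := mem_xs.2 hbl
        rw [h1] at this
        exact hl (by simpa using this)
      have hI : I3 F (y0 • P1 + P2) R (l • R + P1) := by
        intro a1 a2 a3 h'
        have := h (a2 + a3 * l) (a1 * y0 + a3) a1 (by rw [← h']; module)
        obtain ⟨e1, e2, e3⟩ := this
        subst e3
        have e4 : a3 = 0 := by simpa using e2
        subst e4
        simp at e1
        exact ⟨rfl, e1, rfl⟩
      have hN : Nn F b (l • R + P1) (y0 • P1 + P2) = q + 1 := by
        rcases C.unital.2.1 _ _ hI.swap23.i2.symm with g | g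
        · exfalso
          refine C.UT (hbP y0 hy0) hI ?_ ?_
          · rw [C.N_comm, Nn, io_neg hb, hy0]
          · rw [C.N_comm]; exact g
        · exact g
      rw [Nn, io_neg hnb, zero_add] at hN
      rw [← hN]
      refine Finset.card_bij (fun y _ => y - y0) ?_ ?_ ?_
      · intro y hy
        simp only [Finset.mem_filter, Finset.mem_univ, true_and, mem_xs] at hy ⊢
        convert hy using 1
        module
      · intro y _ z _ hyz; exact sub_left_injective hyz
      · intro y hy
        refine ⟨y + y0, ?_, by simp⟩
        simp only [Finset.mem_filter, Finset.mem_univ, true_and, mem_xs] at hy ⊢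
        convert hy using 1
        module)
  refine ⟨e, fun y => ⟨hsum y, hT1 y, fun hy => ?_⟩⟩
  have := he y (by simpa using hy)
  exact ⟨this.1, this.2.2⟩

theorem Cfg.core0 (C : Cfg F E q b) {R P1 P2 : E} (hb : ¬ b R) (h : I3 F R P1 P2)
    (h1 : xs F b R P1 = {0}) (h2 : xs F b R P2 = {0}) (y : F) :
    ∑ x ∈ xs F b R (y • P1 + P2), x = 0 ∧
      ((xs F b R (y • P1 + P2)).card = 1 → xs F b R (y • P1 + P2) = {0}) ∧
      ((xs F b R (y • P1 + P2)).card ≠ 1 → 0 ∉ xs F b R (y • P1 + P2) ∧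
        ∑ x ∈ xs F b R (y • P1 + P2), x⁻¹ = 0) := by
  classical
  obtain ⟨e, he⟩ := C.core hb h h1 h2
  obtain ⟨e', he'⟩ := C.core hb h.swap23 h2 h1
  have hN1 : Nn F b R P1 = 1 := by rw [Nn, io_neg hb, h1]; rfl
  have key : ∀ y : F, (xs F b R (y • P1 + P2)).card ≠ 1 → e' = y * e := by
    intro y hy
    have hy0 : y ≠ 0 := by
      rintro rfl
      apply hy
      rw [zero_smul, zero_add, h2]; rfl
    have e1 : y⁻¹ • P2 + P1 = y⁻¹ • (y • P1 + P2) := by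
      rw [smul_add, smul_smul, inv_mul_cancel₀ hy0, one_smul, add_comm]
    have hyi := inv_ne_zero hy0
    have g := (he' y⁻¹).2.2
    rw [e1, C.xs_smul_card _ _ hyi, C.xs_smul_sum _ _ hyi] at g
    rw [← (g hy).2, ← ((he y).2.2 hy).2, Finset.mul_sum]
    refine Finset.sum_congr rfl fun x _ => ?_
    rw [mul_inv, inv_inv]
  have hT := C.cardT hb h hN1
  have hcard : 1 < (Finset.univ.filter (fun y : F => ¬ (xs F b R (y • P1 + P2)).card = 1)).card := by
    have := Finset.card_filter_add_card_filter_not (s := (Finset.univ : Finset F))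
      (fun y : F => (xs F b R (y • P1 + P2)).card = 1)
    rw [hT, Finset.card_univ, C.card] at this
    nlinarith [C.hq]
  obtain ⟨y1, hy1, y2, hy2, hne⟩ := Finset.one_lt_card.1 hcard
  simp only [Finset.mem_filter, Finset.mem_univ, true_and] at hy1 hy2
  have k1 := key y1 hy1
  have k2 := key y2 hy2
  have : (y1 - y2) * e = 0 := by rw [sub_mul, ← k1, ← k2, sub_self]
  have he0 : e = 0 := by
    rcases mul_eq_zero.1 this with h' | h'
    · exact absurd (sub_eq_zero.1 h') hne
    · exact h'
  subst he0
  exact he y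

theorem Cfg.polar_off (C : Cfg F E q b) {R : E} (hb : ¬ b R) (hR : R ≠ 0) :
    ∃ f : E →ₗ[F] F, f R = 1 ∧
      (∀ S, S ≠ 0 → f S = 0 → (b S → xs F b R S = {0}) ∧
        (¬ b S → (xs F b R S).card = q + 1 ∧ ∑ x ∈ xs F b S R, x = 0)) ∧
      (∀ S, I2 F R S → ∑ x ∈ xs F b R S, x = 0 → f S = 0) := by
  obtain ⟨P1, P2, h, h1, h2⟩ := C.feet hb hR
  have key := C.core0 hb h h1 h2
  have hbP1 : b P1 := by
    have h0 : (0 : F) ∈ xs F b R P1 := by rw [h1]; simp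
    rw [mem_xs, zero_smul, zero_add] at h0
    exact h0
  obtain ⟨f, c2, c3, hx, f1, f2, f3, -, -, -⟩ := h.coords C.dim
  have main : ∀ S, S ≠ 0 → f S = 0 → ∑ x ∈ xs F b R S, x = 0 ∧ (b S → xs F b R S = {0}) ∧
        (¬ b S → (xs F b R S).card = q + 1 ∧ ∑ x ∈ xs F b S R, x = 0) := by
    intro S hS hfS
    have hS' := hx S
    rw [hfS, zero_smul, zero_add] at hS'
    by_cases h3 : c3 S = 0
    · rw [h3, zero_smul, add_zero] at hS'
      have hc2 : c2 S ≠ 0 := by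
        intro h'; rw [h', zero_smul] at hS'; exact hS hS'
      have hxs : xs F b R S = {0} := by
        have hc : (xs F b R S).card = 1 := by rw [hS', C.xs_smul_card _ _ hc2, h1]; rfl
        have h0 : (0 : F) ∈ xs F b R S := by
          rw [mem_xs, zero_smul, zero_add, hS', C.smul _ hc2]; exact hbP1
        obtain ⟨x, hx⟩ := Finset.card_eq_one.1 hc
        rw [hx] at h0 ⊢
        rw [Finset.mem_singleton.1 h0]
      refine ⟨by rw [hxs]; simp, fun _ => hxs, fun hnb => ?_⟩
      exfalso
      apply hnb
      rw [hS', C.smul _ hc2]; exact hbP1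
    · set y := (c3 S)⁻¹ * c2 S with hy
      have hS2 : S = c3 S • (y • P1 + P2) := by
        rw [smul_add, smul_smul, hy, mul_inv_cancel_left₀ h3]; exact hS'
      set c := c3 S
      obtain ⟨k1, k2, k3⟩ := key y
      have hcard : (xs F b R S).card = (xs F b R (y • P1 + P2)).card := by
        conv_lhs => rw [hS2]
        rw [C.xs_smul_card _ _ h3]
      have hsum : ∑ x ∈ xs F b R S, x = 0 := by
        rw [hS2, C.xs_smul_sum _ _ h3 (fun x => x), ← Finset.mul_sum, k1, mul_zero]
      have hbS : b S ↔ (0 : F) ∈ xs F b R (y • P1 + P2) := by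
        rw [mem_xs, zero_smul, zero_add, ← C.smul c h3 (y • P1 + P2), ← hS2]
      refine ⟨hsum, ?_, ?_⟩
      · intro hb'
        have hc1 : (xs F b R S).card = 1 := by
          by_contra hne
          rw [hcard] at hne
          exact (k3 hne).1 (hbS.1 hb')
        obtain ⟨x, hx⟩ := Finset.card_eq_one.1 hc1
        rw [hx, Finset.sum_singleton] at hsum
        rw [hx, hsum]
      · intro hnb
        have hc1 : (xs F b R (y • P1 + P2)).card ≠ 1 := by
          intro hc
          apply hnb
          rw [hbS, k2 hc]; simp
        refine ⟨?_, ?_⟩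
        · have := C.unital.2.1 _ _ (h.i2y y)
          rw [Nn, io_neg hb] at this
          omega
        · rw [C.xs_inv_sum R S hb hnb, hS2, C.xs_smul_sum _ _ h3 (fun x => x⁻¹)]
          simp only [mul_inv]
          rw [← Finset.mul_sum, (k3 hc1).2, mul_zero]
  refine ⟨f, f1, fun S hS hf => (main S hS hf).2, ?_⟩
  intro S hRS hsum
  set c := f S with hc
  set S' := S - c • R with hS'
  have e1 : S = c • R + S' := by rw [hS']; abel
  have hS'0 : S' ≠ 0 := by
    intro h0
    rw [h0, add_zero] at e1
    have := (hRS c (-1) (by rw [e1]; module)).2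
    simp at this
  have hf' : f S' = 0 := by rw [hS', map_sub, map_smul, f1, smul_eq_mul, mul_one, ← hc, sub_self]
  have m := (main S' hS'0 hf').1
  rw [e1, xs_shift_sum _ _ _ (fun x => x), Finset.sum_sub_distrib, m, Finset.sum_const, nsmul_eq_mul] at hsum
  have hI : I2 F R S' := by
    have := I2.shift_iff (F := F) (u := R) (w := S') c
    rw [← e1] at this
    exact this.1 hRS.symm
  have := C.N1 _ _ hI
  rw [Nn, io_neg hb, zero_add] at this
  rw [this] at hsum
  simpa using hsum

theorem Cfg.polar_on (C : Cfg F E q b) {R : E} (hb : b R) :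
    ∃ f : E →ₗ[F] F, f ≠ 0 ∧ f R = 0 ∧ ∀ S, I2 F R S → (f S = 0 ↔ xs F b R S = ∅) := by
  have hR : R ≠ 0 := by rintro rfl; exact C.b0 hb
  obtain ⟨v, hv, hN⟩ := C.exTan hR
  obtain ⟨w, hw⟩ := exists_ext2 C.dim hv
  obtain ⟨c1, c2, f, hx, -, -, -, f1, f2, f3⟩ := hw.coords C.dim
  refine ⟨f, ?_, f1, ?_⟩
  · rintro rfl; simp at f3
  intro S hS
  constructor
  · intro hf
    have hS' := hx S
    rw [hf, zero_smul, add_zero] at hS'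
    have hc : c2 S ≠ 0 := by
      intro h0
      rw [h0, zero_smul, add_zero] at hS'
      have := (hS (c1 S) (-1) (by rw [← hS']; module)).2
      simp at this
    have h1 : Nn F b R S = 1 := by
      rw [hS', C.N_shift, Nn, C.xs_smul_card _ _ hc]; exact hN
    rw [Nn, io_pos hb] at h1
    exact Finset.card_eq_zero.1 (by omega)
  · intro h0
    by_contra hf
    refine C.UT hb (v := v) (w := S) ?_ hN ?_
    · intro a1 a2 a3 h
      have hfa := congrArg f h
      simp only [map_add, map_smul, f1, f2, smul_eq_mul, mul_zero, zero_add, map_zero, mul_eq_zero, hf, or_false] at hfa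
      subst hfa
      have := hv a1 a2 (by simpa using h)
      exact ⟨this.1, this.2, rfl⟩
    · rw [Nn, io_pos hb, h0]; rfl

theorem Cfg.polarity (C : Cfg F E q b) : ∃ f : E → (E →ₗ[F] F),
    (∀ R, R ≠ 0 → f R ≠ 0) ∧ (∀ R, R ≠ 0 → (b R ↔ f R R = 0)) ∧
    (∀ R S, R ≠ 0 → S ≠ 0 → f R S = 0 → f S R = 0) ∧
    (∀ R S, R ≠ 0 → S ≠ 0 → ¬ b R → ¬ b S → f R S = 0 → (xs F b R S).card = q + 1) := by
  have hex : ∀ R : E, ∃ f : E →ₗ[F] F, (¬ b R → R ≠ 0 → f R = 1 ∧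
      (∀ S, S ≠ 0 → f S = 0 → (b S → xs F b R S = {0}) ∧
        (¬ b S → (xs F b R S).card = q + 1 ∧ ∑ x ∈ xs F b S R, x = 0)) ∧
      (∀ S, I2 F R S → ∑ x ∈ xs F b R S, x = 0 → f S = 0)) ∧
      (b R → f ≠ 0 ∧ f R = 0 ∧ ∀ S, I2 F R S → (f S = 0 ↔ xs F b R S = ∅)) := by
    intro R
    by_cases hb : b R
    · obtain ⟨f, hf⟩ := C.polar_on hb
      exact ⟨f, fun h => absurd hb h, fun _ => hf⟩
    · by_cases hR : R = 0
      · exact ⟨0, fun _ h => absurd hR h, fun h => absurd h hb⟩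
      · obtain ⟨f, hf⟩ := C.polar_off hb hR
        exact ⟨f, fun _ _ => hf, fun h => absurd h hb⟩
  choose f hoff hon using hex
  have hself : ∀ R, R ≠ 0 → (b R ↔ f R R = 0) := by
    intro R hR
    constructor
    · intro hb; exact (hon R hb).2.1
    · intro h0
      by_contra hb
      have := (hoff R hb hR).1
      rw [h0] at this; simp at this
  refine ⟨f, ?_, hself, ?_, ?_⟩
  · intro R hR h0
    by_cases hb : b R
    · exact (hon R hb).1 h0
    · have := (hoff R hb hR).1
      rw [h0] at this; simp at this
  · intro R S hR hS hf
    by_cases hI : I2 F R S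
    · by_cases hbR : b R <;> by_cases hbS : b S
      · have := ((hon R hbR).2.2 S hI).1 hf
        have h0 : (0 : F) ∈ xs F b R S := by rw [mem_xs, zero_smul, zero_add]; exact hbS
        rw [this] at h0; simp at h0
      · have h1 := ((hon R hbR).2.2 S hI).1 hf
        have hN : Nn F b S R = 1 := by rw [C.N_comm, Nn, io_pos hbR, h1]; rfl
        rw [Nn, io_neg hbS, zero_add] at hN
        have h0 : (0 : F) ∈ xs F b S R := by rw [mem_xs, zero_smul, zero_add]; exact hbR
        obtain ⟨x, hx⟩ := Finset.card_eq_one.1 hN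
        refine (hoff S hbS hS).2.2 R hI.symm ?_
        rw [hx] at h0 ⊢
        rw [Finset.sum_singleton, ← Finset.mem_singleton.1 h0]
      · have h1 := ((hoff R hbR hR).2.1 S hS hf).1 hbS
        have hN : Nn F b S R = 1 := by rw [C.N_comm, Nn, io_neg hbR, h1]; rfl
        rw [Nn, io_pos hbS] at hN
        refine ((hon S hbS).2.2 R hI.symm).2 (Finset.card_eq_zero.1 (by omega))
      · have h1 := ((hoff R hbR hR).2.1 S hS hf).2 hbS
        exact (hoff S hbS hS).2.2 R hI.symm h1.2
    · simp only [I2, not_forall] at hI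
      obtain ⟨a, c, hac, hn⟩ := hI
      have hc : c ≠ 0 := by
        rintro rfl
        simp only [zero_smul, add_zero, smul_eq_zero, hR, or_false] at hac
        exact hn ⟨hac, rfl⟩
      have ha : a ≠ 0 := by
        rintro rfl
        simp only [zero_smul, zero_add, smul_eq_zero, hS, or_false] at hac
        exact hc hac
      have hfR : f R R = 0 := by
        have := congrArg (f R) hac
        simp only [map_add, map_smul, hf, smul_eq_mul, mul_zero, add_zero, map_zero, mul_eq_zero, ha, false_or] at this
        exact this
      have hbR := (hself R hR).2 hfR
      have hbS : b S := by
        rw [← C.smul (-c) (neg_ne_zero.2 hc)]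
        rw [← C.smul a ha] at hbR
        convert hbR using 1
        have : a • R = -(c • S) := by rw [eq_neg_iff_add_eq_zero]; exact hac
        rw [this]; simp
      have hfS := (hself S hS).1 hbS
      have := congrArg (f S) hac
      simp only [map_add, map_smul, hfS, smul_eq_mul, mul_zero, add_zero, map_zero, mul_eq_zero, ha, false_or] at this
      exact this
  · intro R S hR hS hbR hbS hf
    exact (((hoff R hbR hR).2.1 S hS hf).2 hbS).1

end Polar

section Alg
variable {F : Type} [Field F]

theorem sig_alg (σ : F → F) (hm : ∀ x y, σ (x * y) = σ x * σ y) (h1 : σ 1 = 1) (h0 : σ 0 = 0)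
    (a c : F) (ha : a ≠ 0) (hc : c ≠ 0)
    (H : ∀ y z Y Z, 1 + a * σ y * Y + c * σ z * Z = 0 → 1 + a * σ Y * y + c * σ Z * z = 0) :
    (∀ x, σ (σ x) = x) ∧ (∀ x y, σ (x + y) = σ x + σ y) ∧ σ a = a ∧ σ c = c := by
  have hne : ∀ x, x ≠ 0 → σ x ≠ 0 := by
    intro x hx h
    have := hm x x⁻¹
    rw [mul_inv_cancel₀ hx, h1, h, zero_mul] at this
    exact one_ne_zero this
  have hinv : ∀ x, x ≠ 0 → σ x⁻¹ = (σ x)⁻¹ := by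
    intro x hx
    have := hm x x⁻¹
    rw [mul_inv_cancel₀ hx, h1] at this
    exact eq_inv_of_mul_eq_one_right this.symm
  have hee : σ (-1) * σ (-1) = 1 := by rw [← hm]; simp [h1]
  -- relation for a
  have ga : ∀ y, y ≠ 0 → a * σ (-1) * y = - (σ a * σ (σ y)) := by
    intro y hy
    have hs := hne y hy
    have := H y 0 (-1 * (a * σ y)⁻¹) 0 (by field_simp; ring)
    rw [hm, hinv _ (mul_ne_zero ha hs), hm] at this
    have hsa := hne a ha
    have hss := hne _ hs
    field_simp at this
    simp only [h0, mul_zero, zero_mul, add_zero] at this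
    linear_combination this
  have gc : σ c = - (c * σ (-1)) := by
    have := H 0 1 0 (-1 * c⁻¹) (by rw [h1]; field_simp; ring)
    rw [hm, hinv _ hc] at this
    have hsa := hne c hc
    field_simp at this
    simp only [h0, mul_zero, zero_mul, add_zero, mul_one] at this
    linear_combination this
  have ga1 : σ a = - (a * σ (-1)) := by
    have := ga 1 one_ne_zero
    rw [h1, h1, mul_one, mul_one] at this
    rw [this, neg_neg]
  have hss : ∀ x, σ (σ x) = x := by
    intro x
    by_cases hx : x = 0
    · rw [hx, h0, h0]
    · have := ga x hx
      rw [ga1] at this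
      have hn : a * σ (-1) ≠ 0 := mul_ne_zero ha (hne _ (by simp))
      apply mul_left_cancel₀ hn
      linear_combination -this
  have hadd0 : ∀ A, σ (1 + A) = 1 - σ (-1) * σ A := by
    intro A
    have := H 1 1 (A * a⁻¹) (-1 * (1 + A) * c⁻¹) (by rw [h1]; field_simp; ring)
    simp only [hm, hinv _ ha, hinv _ hc, ga1, gc] at this
    have hn : σ (-1) ≠ 0 := hne _ (by simp)
    field_simp at this
    linear_combination (-σ (-1)) * this - (σ (1 + A) - 1) * hee
  have he : σ (-1) = -1 := by
    have h2 : (σ (-1) - 1) * (σ (-1) + 1) = 0 := by linear_combination hee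
    rcases mul_eq_zero.1 h2 with h | h
    · have h3 : σ (-1) = 1 := by linear_combination h
      have h4 := hadd0 1
      rw [h3, h1] at h4
      have h5 : (1 + 1 : F) = 0 := by
        by_contra hcon
        exact hne _ hcon (by rw [h4]; ring)
      rw [h3]; linear_combination h5
    · linear_combination h
  refine ⟨hss, ?_, by rw [ga1, he]; ring, by rw [gc, he]; ring⟩
  intro x y
  by_cases hx : x = 0
  · rw [hx, h0]; simp
  · have : x + y = x * (1 + y * x⁻¹) := by field_simp
    rw [this, hm, hadd0, he, hm, hinv x hx]
    have := hne x hx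
    field_simp
    ring

theorem frob_of_invol [Fintype F] (q : ℕ) (hF : Fintype.card F = q ^ 2) (σ : F →+* F)
    (hs : ∀ x, σ (σ x) = x) (hne : ∃ x, σ x ≠ x) : ∀ x, σ x = x ^ q := by
  obtain ⟨p, hp⟩ := CharP.exists F
  have hpp : Fact p.Prime := ⟨CharP.char_is_prime F p⟩
  letI : Algebra (ZMod p) F := ZMod.algebra F p
  let s : F ≃ₐ[ZMod p] F := AlgEquiv.ofRingEquiv (f := RingEquiv.ofRingHom σ σ (by ext x; exact hs x) (by ext x; exact hs x))
    (by
      intro r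
      change σ (algebraMap (ZMod p) F r) = _
      have : σ.comp (algebraMap (ZMod p) F) = algebraMap (ZMod p) F := Subsingleton.elim _ _
      exact congrArg (fun g => g r) this)
  have hsx : ∀ x, s x = σ x := fun x => rfl
  have hbij := FiniteField.bijective_frobeniusAlgEquivOfAlgebraic_pow (ZMod p) F
  obtain ⟨⟨i, hin'⟩, hi⟩ := hbij.2 s
  simp only at hi
  have hord := FiniteField.orderOf_frobeniusAlgEquivOfAlgebraic (ZMod p) F
  set n := finrank (ZMod p) F with hn
  have hss : s * s = 1 := by ext x; exact hs x
  have hd : n ∣ 2 * i := by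
    rw [← hord]
    apply orderOf_dvd_of_pow_eq_one
    rw [two_mul, pow_add, hi, hss]
  have hi0 : i ≠ 0 := by
    intro h0
    rw [h0, pow_zero] at hi
    obtain ⟨x, hx⟩ := hne
    apply hx
    rw [← hsx, ← hi]; rfl
  have hin : 2 * i = n := by
    obtain ⟨k, hk⟩ := hd
    have hk1 : k = 1 := by
      rcases k with _ | _ | k
      · omega
      · rfl
      · exfalso; nlinarith
    rw [hk, hk1, mul_one]
  have hcard := Module.card_eq_pow_finrank (K := ZMod p) (V := F)
  rw [hF, ZMod.card, ← hn, ← hin, mul_comm, pow_mul] at hcard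
  have hpq : q = p ^ i := Nat.pow_left_injective (by norm_num : (2 : ℕ) ≠ 0) hcard
  intro x
  rw [← hsx, ← hi, hpq]
  have : ∀ k : ℕ, ((FiniteField.frobeniusAlgEquivOfAlgebraic (ZMod p) F) ^ k) x = x ^ p ^ k := by
    intro k
    induction k with
    | zero => simp
    | succ k ih =>
      rw [pow_succ', AlgEquiv.mul_apply, ih, FiniteField.coe_frobeniusAlgEquivOfAlgebraic, ZMod.card]
      change (x ^ p ^ k) ^ p = _
      rw [← pow_mul, pow_succ]
  exact this _

end Alg

section Form
variable {F E : Type} [Field F] [Fintype F] [AddCommGroup E] [Module F E] {q : ℕ} {b : E → Prop}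
variable [Fintype E]

theorem Cfg.triangle (C : Cfg F E q b) (f : E → (E →ₗ[F] F))
    (f0 : ∀ R, R ≠ 0 → f R ≠ 0) (fb : ∀ R, R ≠ 0 → (b R ↔ f R R = 0))
    (fs : ∀ R S, R ≠ 0 → S ≠ 0 → f R S = 0 → f S R = 0) :
    ∃ e1 e2 e3, I3 F e1 e2 e3 ∧ ¬ b e1 ∧ ¬ b e2 ∧ f e1 e1 ≠ 0 ∧ f e2 e2 ≠ 0 ∧ f e3 e3 ≠ 0 ∧
      f e1 e2 = 0 ∧ f e1 e3 = 0 ∧ f e2 e1 = 0 ∧ f e2 e3 = 0 ∧ f e3 e1 = 0 ∧ f e3 e2 = 0 := by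
  obtain ⟨u0, w0, h0⟩ := C.exI2
  obtain ⟨e1, w, hw, hb1, -⟩ := C.off h0
  have h10 := hw.ne
  have h11 : f e1 e1 ≠ 0 := fun h => hb1 ((fb e1 h10).2 h)
  obtain ⟨v, hv⟩ := exists_ext2 C.dim hw
  -- project to the kernel
  obtain ⟨w', v', hI, hw', hv'⟩ : ∃ w' v', I3 F e1 w' v' ∧ f e1 w' = 0 ∧ f e1 v' = 0 := by
    refine ⟨w - (f e1 w * (f e1 e1)⁻¹) • e1, v - (f e1 v * (f e1 e1)⁻¹) • e1, ?_, ?_, ?_⟩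
    · intro a1 a2 a3 h
      have := hv (a1 - a2 * (f e1 w * (f e1 e1)⁻¹) - a3 * (f e1 v * (f e1 e1)⁻¹)) a2 a3 (by rw [← h]; module)
      obtain ⟨g1, g2, g3⟩ := this
      subst g2 g3
      simp at g1
      exact ⟨g1, rfl, rfl⟩
    · rw [map_sub, map_smul, smul_eq_mul, inv_mul_cancel_right₀ h11, sub_self]
    · rw [map_sub, map_smul, smul_eq_mul, inv_mul_cancel_right₀ h11, sub_self]
  obtain ⟨e2, g, hI2, he2, hg, hb2⟩ : ∃ e2 g, I3 F e1 e2 g ∧ f e1 e2 = 0 ∧ f e1 g = 0 ∧ ¬ b e2 := by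
    by_cases hbw : b w'
    · have hlt : (xs F b w' v').card < (Finset.univ : Finset F).card := by
        rw [Finset.card_univ, C.card]
        have h1 := C.le w' v' hI.swap12.swap23.i2
        rw [Nn, io_pos hbw] at h1
        nlinarith [C.hq]
      obtain ⟨x, _, hx⟩ := Finset.exists_mem_notMem_of_card_lt_card hlt
      rw [mem_xs] at hx
      exact ⟨x • w' + v', w', hI.shift x, by simp [hw', hv'], hw', hx⟩
    · exact ⟨w', v', hI, hw', hv', hbw⟩
  have h20 := hI2.swap12.ne
  have h22 : f e2 e2 ≠ 0 := fun h => hb2 ((fb e2 h20).2 h)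
  obtain ⟨e3, hI3, h13, h23⟩ : ∃ e3, I3 F e1 e2 e3 ∧ f e1 e3 = 0 ∧ f e2 e3 = 0 := by
    refine ⟨g - (f e2 g * (f e2 e2)⁻¹) • e2, ?_, ?_, ?_⟩
    · intro a1 a2 a3 h
      have := hI2 a1 (a2 - a3 * (f e2 g * (f e2 e2)⁻¹)) a3 (by rw [← h]; module)
      obtain ⟨g1, g2, g3⟩ := this
      subst g1 g3
      simp at g2
      exact ⟨rfl, g2, rfl⟩
    · simp [hg, he2]
    · rw [map_sub, map_smul, smul_eq_mul, inv_mul_cancel_right₀ h22, sub_self]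
  have h30 : e3 ≠ 0 := hI3.swap23.swap12.ne
  have h31 := fs _ _ h10 h30 h13
  have h32 := fs _ _ h20 h30 h23
  have h33 : f e3 e3 ≠ 0 := by
    intro h
    apply f0 e3 h30
    obtain ⟨c1, c2, c3, hx, -⟩ := hI3.coords C.dim
    ext S
    rw [hx S]
    simp [h31, h32, h]
  exact ⟨e1, e2, e3, hI3, hb1, hb2, h11, h22, h33, he2, h13, fs _ _ h10 h20 he2, h23, h31, h32⟩

theorem Cfg.form (C : Cfg F E q b) : ∃ (e1 e2 e3 : E) (a c : F), I3 F e1 e2 e3 ∧ a ≠ 0 ∧ c ≠ 0 ∧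
    a ^ q = a ∧ c ^ q = c ∧ ∀ x y z : F, ¬ (x = 0 ∧ y = 0 ∧ z = 0) →
      (b (x • e1 + y • e2 + z • e3) ↔ x * x ^ q + a * (y * y ^ q) + c * (z * z ^ q) = 0) := by
  obtain ⟨f, f0, fb, fs, fc⟩ := C.polarity
  obtain ⟨e1, e2, e3, hI, hb1, hb2, h11, h22, h33, h12, h13, h21, h23, h31, h32⟩ := C.triangle f f0 fb fs
  have h10 := hI.ne
  have h20 := hI.swap12.ne
  have h30 : e3 ≠ 0 := hI.swap23.swap12.ne
  have hV0 : ∀ x y z : F, ¬ (x = 0 ∧ y = 0 ∧ z = 0) → x • e1 + y • e2 + z • e3 ≠ 0 :=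
    fun x y z h h' => h (hI x y z h')
  -- f R e_i = 0 iff i-th coordinate zero
  have k1 : ∀ x y z : F, ¬ (x = 0 ∧ y = 0 ∧ z = 0) → (f (x • e1 + y • e2 + z • e3) e1 = 0 ↔ x = 0) := by
    intro x y z h
    have hh : f (x • e1 + y • e2 + z • e3) e1 = 0 ↔ f e1 (x • e1 + y • e2 + z • e3) = 0 :=
      ⟨fs _ _ (hV0 x y z h) h10, fs _ _ h10 (hV0 x y z h)⟩
    rw [hh]; simp [h12, h13, h11]
  have k2 : ∀ x y z : F, ¬ (x = 0 ∧ y = 0 ∧ z = 0) → (f (x • e1 + y • e2 + z • e3) e2 = 0 ↔ y = 0) := by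
    intro x y z h
    have hh : f (x • e1 + y • e2 + z • e3) e2 = 0 ↔ f e2 (x • e1 + y • e2 + z • e3) = 0 :=
      ⟨fs _ _ (hV0 x y z h) h20, fs _ _ h20 (hV0 x y z h)⟩
    rw [hh]; simp [h21, h23, h22]
  have k3 : ∀ x y z : F, ¬ (x = 0 ∧ y = 0 ∧ z = 0) → (f (x • e1 + y • e2 + z • e3) e3 = 0 ↔ z = 0) := by
    intro x y z h
    have hh : f (x • e1 + y • e2 + z • e3) e3 = 0 ↔ f e3 (x • e1 + y • e2 + z • e3) = 0 :=
      ⟨fs _ _ (hV0 x y z h) h30, fs _ _ h30 (hV0 x y z h)⟩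
    rw [hh]; simp [h31, h32, h33]
  -- abstract: the bilinear-like relation
  let G : F → F → F → F → F → F → F := fun x y z X Y Z => f (x • e1 + y • e2 + z • e3) (X • e1 + Y • e2 + Z • e3)
  have hG : ∀ x y z X Y Z, G x y z X Y Z = X * f (x • e1 + y • e2 + z • e3) e1 +
      Y * f (x • e1 + y • e2 + z • e3) e2 + Z * f (x • e1 + y • e2 + z • e3) e3 := by
    intro x y z X Y Z; simp [G]
  have hGs : ∀ x y z X Y Z, ¬ (x = 0 ∧ y = 0 ∧ z = 0) → ¬ (X = 0 ∧ Y = 0 ∧ Z = 0) →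
      G x y z X Y Z = 0 → G X Y Z x y z = 0 := by
    intro x y z X Y Z h h' hg
    exact fs _ _ (hV0 _ _ _ h) (hV0 _ _ _ h') hg
  have n1 : ∀ y z : F, ¬ ((1 : F) = 0 ∧ y = 0 ∧ z = 0) := fun y z h => one_ne_zero h.1
  have n2 : ∀ x z : F, ¬ (x = 0 ∧ (1 : F) = 0 ∧ z = 0) := fun y z h => one_ne_zero h.2.1
  have n3 : ∀ x y : F, ¬ (x = 0 ∧ y = 0 ∧ (1 : F) = 0) := fun y z h => one_ne_zero h.2.2
  have d1 : ∀ y z : F, f ((1 : F) • e1 + y • e2 + z • e3) e1 ≠ 0 := fun y z h => one_ne_zero ((k1 1 y z (n1 y z)).1 h)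
  let t : F → F → F := fun y z => f ((1 : F) • e1 + y • e2 + z • e3) e2 * (f ((1 : F) • e1 + y • e2 + z • e3) e1)⁻¹
  let s : F → F → F := fun y z => f ((1 : F) • e1 + y • e2 + z • e3) e3 * (f ((1 : F) • e1 + y • e2 + z • e3) e1)⁻¹
  have hGt : ∀ y z X Y Z, G 1 y z X Y Z = 0 ↔ X + t y z * Y + s y z * Z = 0 := by
    intro y z X Y Z
    have := d1 y z
    rw [hG]
    have e : X * f ((1 : F) • e1 + y • e2 + z • e3) e1 + Y * f ((1 : F) • e1 + y • e2 + z • e3) e2 +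
        Z * f ((1 : F) • e1 + y • e2 + z • e3) e3 =
        f ((1 : F) • e1 + y • e2 + z • e3) e1 * (X + t y z * Y + s y z * Z) := by
      simp only [t, s]; field_simp
    rw [e, mul_eq_zero]
    exact or_iff_right this
  have ht : ∀ y z, t y z = t y 0 := by
    intro y z
    have h1 : G 1 y z (-(t y z)) 1 0 = 0 := by rw [hGt]; ring
    have h2 := hGs _ _ _ _ _ _ (n1 _ _) (n2 _ _) h1
    rw [hG] at h2
    have hz := (k3 (-(t y z)) 1 0 (n2 _ _)).2 rfl
    rw [hz, mul_zero] at h2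
    have h3 : G (-(t y z)) 1 0 1 y 0 = 0 := by rw [hG]; linear_combination h2
    have h4 := hGs _ _ _ _ _ _ (n2 _ _) (n1 _ _) h3
    rw [hGt] at h4
    linear_combination -h4
  have hs : ∀ y z, s y z = s 0 z := by
    intro y z
    have h1 : G 1 y z (-(s y z)) 0 1 = 0 := by rw [hGt]; ring
    have h2 := hGs _ _ _ _ _ _ (n1 _ _) (n3 _ _) h1
    rw [hG] at h2
    have hz := (k2 (-(s y z)) 0 1 (n3 _ _)).2 rfl
    rw [hz, mul_zero] at h2
    have h3 : G (-(s y z)) 0 1 1 0 z = 0 := by rw [hG]; linear_combination h2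
    have h4 := hGs _ _ _ _ _ _ (n3 _ _) (n1 _ _) h3
    rw [hGt] at h4
    linear_combination -h4
  obtain ⟨τ, hτ⟩ : ∃ τ : F → F, ∀ y, τ y = t y 0 := ⟨fun y => t y 0, fun _ => rfl⟩
  obtain ⟨ρ, hρ⟩ : ∃ ρ : F → F, ∀ z, ρ z = s 0 z := ⟨fun z => s 0 z, fun _ => rfl⟩
  have hGt' : ∀ y z X Y Z, G 1 y z X Y Z = 0 ↔ X + τ y * Y + ρ z * Z = 0 := by
    intro y z X Y Z; rw [hGt, ht, hs, ← hτ, ← hρ]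
  have hτ0 : ∀ y, τ y = 0 ↔ y = 0 := by
    intro y
    rw [hτ, ← k2 1 y 0 (n1 _ _)]
    simp only [t, mul_eq_zero, inv_eq_zero, d1, or_false]
  have hρ0 : ∀ y, ρ y = 0 ↔ y = 0 := by
    intro y
    rw [hρ, ← k3 1 0 y (n1 _ _)]
    simp only [s, mul_eq_zero, inv_eq_zero, d1, or_false]
  have ha : τ 1 ≠ 0 := fun h => one_ne_zero ((hτ0 1).1 h)
  have hc : ρ 1 ≠ 0 := fun h => one_ne_zero ((hρ0 1).1 h)
  have hmul : ∀ u z, τ (u * z) * ρ 1 = ρ z * τ u := by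
    intro u z
    set m := -(τ u) * (ρ 1)⁻¹ with hm
    have h1 : G 1 u 1 0 1 m = 0 := by rw [hGt', hm]; field_simp; ring
    have h2 := hGs _ _ _ _ _ _ (n1 _ _) (n2 _ _) h1
    rw [hG] at h2
    have hz := (k1 0 1 m (n2 _ _)).2 rfl
    rw [hz, mul_zero] at h2
    have h3 : G 0 1 m 1 (u * z) z = 0 := by rw [hG, hz]; linear_combination z * h2
    have h4 := hGs _ _ _ _ _ _ (n2 _ _) (n1 _ _) h3
    rw [hGt', hm] at h4
    field_simp at h4
    linear_combination h4
  set a := τ 1 with had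
  set c := ρ 1 with hcd
  obtain ⟨σ, hσ⟩ : ∃ σ : F → F, ∀ x, σ x = τ x * a⁻¹ := ⟨fun x => τ x * a⁻¹, fun _ => rfl⟩
  have eτ : ∀ x, τ x = a * σ x := by intro x; rw [hσ]; field_simp
  have eρ : ∀ x, ρ x = c * σ x := by
    intro x
    have := hmul 1 x
    rw [one_mul, eτ x, ← had] at this
    apply mul_right_cancel₀ ha
    linear_combination -this
  have σm : ∀ x y, σ (x * y) = σ x * σ y := by
    intro x y
    have := hmul x y
    rw [eτ, eτ, eρ] at this
    apply mul_left_cancel₀ (mul_ne_zero ha hc)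
    linear_combination this
  have σ1 : σ 1 = 1 := by rw [hσ, ← had]; exact mul_inv_cancel₀ ha
  have σ0 : σ 0 = 0 := by rw [hσ, (hτ0 0).2 rfl, zero_mul]
  have H : ∀ y z Y Z, 1 + a * σ y * Y + c * σ z * Z = 0 → 1 + a * σ Y * y + c * σ Z * z = 0 := by
    intro y z Y Z h
    rw [← eτ, ← eρ, ← hGt'] at h ⊢
    exact hGs _ _ _ _ _ _ (n1 _ _) (n1 _ _) h
  obtain ⟨σσ, σadd, σa, σc⟩ := sig_alg σ σm σ1 σ0 a c ha hc H
  let S : F →+* F := { toFun := σ, map_one' := σ1, map_mul' := σm, map_zero' := σ0, map_add' := σadd }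
  have hS : ∀ x, S x = σ x := fun x => rfl
  have σne : ∀ x, x ≠ 0 → σ x ≠ 0 := fun x hx => by rw [← hS]; simpa using hx
  have formσ : ∀ x y z : F, ¬ (x = 0 ∧ y = 0 ∧ z = 0) →
      (b (x • e1 + y • e2 + z • e3) ↔ x * σ x + a * (y * σ y) + c * (z * σ z) = 0) := by
    intro x y z h
    by_cases hx : x = 0
    · subst hx
      by_cases hy : y = 0
      · subst hy
        have hz : z ≠ 0 := fun hz => h ⟨rfl, rfl, hz⟩
        have : (0 : F) • e1 + (0 : F) • e2 + z • e3 = z • e3 := by simp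
        rw [this, C.smul z hz, fb e3 h30]
        simp [h33, hc, hz, σne z hz]
      · have e : (0 : F) • e1 + y • e2 + z • e3 = y • ((0 : F) • e1 + (1 : F) • e2 + (z * y⁻¹) • e3) := by
          rw [smul_add, smul_add, smul_smul, smul_smul, smul_smul]
          congr 2
          · simp
          · simp
          · field_simp
        rw [e, C.smul y hy, fb _ (hV0 _ _ _ (n2 _ _))]
        set m := z * y⁻¹ with hm
        have hzm : z = m * y := by rw [hm]; field_simp
        change G 0 1 m 0 1 m = 0 ↔ _
        have hB : f ((0 : F) • e1 + (1 : F) • e2 + m • e3) e2 ≠ 0 := fun h => one_ne_zero ((k2 0 1 m (n2 _ _)).1 h)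
        have hD : a * f ((0 : F) • e1 + (1 : F) • e2 + m • e3) e3 = c * σ m * f ((0 : F) • e1 + (1 : F) • e2 + m • e3) e2 := by
          set B := f ((0 : F) • e1 + (1 : F) • e2 + m • e3) e2 with hBd
          set D := f ((0 : F) • e1 + (1 : F) • e2 + m • e3) e3 with hDd
          have hz := (k1 0 1 m (n2 _ _)).2 rfl
          have h3 : G 0 1 m 1 (-D * B⁻¹) 1 = 0 := by
            rw [hG, hz, ← hBd, ← hDd]; field_simp; ring
          have h4 := hGs _ _ _ _ _ _ (n2 _ _) (n1 _ _) h3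
          rw [hGt', eτ, eρ, σ1] at h4
          obtain ⟨w, hw⟩ : ∃ w, w = -D * B⁻¹ := ⟨_, rfl⟩
          rw [← hw] at h4
          have h4' : a * σ w = (-1) * (c * m) := by linear_combination h4
          have h5 := congrArg σ h4'
          have σn : σ (-1) = -1 := by rw [← hS, map_neg, hS, σ1]
          rw [σm, σm, σm, σσ, σa, σc, σn] at h5
          have h6 : w * B = -D := by rw [hw, mul_assoc, inv_mul_cancel₀ hB, mul_one]
          linear_combination (-B) * h5 + a * h6
        rw [hG]
        have hE : a * (0 * f ((0 : F) • e1 + (1 : F) • e2 + m • e3) e1 +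
            1 * f ((0 : F) • e1 + (1 : F) • e2 + m • e3) e2 + m * f ((0 : F) • e1 + (1 : F) • e2 + m • e3) e3) =
            (a + c * (m * σ m)) * f ((0 : F) • e1 + (1 : F) • e2 + m • e3) e2 := by
          linear_combination m * hD
        have hE2 : 0 * σ 0 + a * (y * σ y) + c * (z * σ z) = (a + c * (m * σ m)) * (y * σ y) := by
          rw [hzm, σm]; ring
        rw [hE2]
        constructor
        · intro h0
          rw [h0, mul_zero] at hE
          rcases mul_eq_zero.1 hE.symm with h' | h'
          · rw [h', zero_mul]
          · exact absurd h' hB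
        · intro h0
          rcases mul_eq_zero.1 h0 with h' | h'
          · rw [h', zero_mul (f ((0 : F) • e1 + (1 : F) • e2 + m • e3) e2)] at hE
            rcases mul_eq_zero.1 hE with h'' | h''
            · exact absurd h'' ha
            · exact h''
          · exact absurd h' (mul_ne_zero hy (σne y hy))
    · have e : x • e1 + y • e2 + z • e3 = x • ((1 : F) • e1 + (y * x⁻¹) • e2 + (z * x⁻¹) • e3) := by
        rw [smul_add, smul_add, smul_smul, smul_smul, smul_smul]
        congr 2
        · simp
        · field_simp
        · field_simp
      rw [e, C.smul x hx, fb _ (hV0 _ _ _ (n1 _ _))]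
      set m := z * x⁻¹ with hm
      set l := y * x⁻¹ with hl
      have hzm : z = m * x := by rw [hm]; field_simp
      have hyl : y = l * x := by rw [hl]; field_simp
      change G 1 l m 1 l m = 0 ↔ _
      rw [hGt', eτ, eρ]
      have hE : x * σ x + a * (y * σ y) + c * (z * σ z) = (1 + a * σ l * l + c * σ m * m) * (x * σ x) := by
        have g1 : σ z = σ m * σ x := by rw [← σm, ← hzm]
        have g2 : σ y = σ l * σ x := by rw [← σm, ← hyl]
        rw [g1, g2]
        linear_combination (a * σ l * σ x) * hyl + (c * σ m * σ x) * hzm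
      rw [hE, mul_eq_zero]
      simp [hx, σne x hx]
  -- σ is not the identity
  have hneid : ∃ x, S x ≠ x := by
    classical
    by_contra hcon
    push Not at hcon
    have hcard := fc e1 e2 h10 h20 hb1 hb2 h12
    have hsub : xs F b e1 e2 ⊆ (Polynomial.X ^ 2 + Polynomial.C a : Polynomial F).roots.toFinset := by
      intro x hx
      rw [mem_xs] at hx
      have := formσ x 1 0 (n2 _ _)
      rw [one_smul, zero_smul, add_zero] at this
      have h2 := this.1 hx
      rw [← hS, hcon, σ1, σ0] at h2
      rw [Multiset.mem_toFinset, Polynomial.mem_roots (Polynomial.X_pow_add_C_ne_zero (by norm_num) a)]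
      simp only [Polynomial.IsRoot.def, Polynomial.eval_add, Polynomial.eval_pow, Polynomial.eval_X, Polynomial.eval_C]
      linear_combination h2
    have h3 := Finset.card_le_card hsub
    have h4 := Multiset.toFinset_card_le (Polynomial.X ^ 2 + Polynomial.C a : Polynomial F).roots
    have h5 := Polynomial.card_roots' (Polynomial.X ^ 2 + Polynomial.C a : Polynomial F)
    rw [Polynomial.natDegree_X_pow_add_C] at h5
    have := C.hq
    omega
  have hfrob := frob_of_invol q C.card S σσ hneid
  simp only [hS] at hfrob
  refine ⟨e1, e2, e3, a, c, hI, ha, hc, by rw [← hfrob, σa], by rw [← hfrob, σc], ?_⟩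
  intro x y z h
  rw [formσ x y z h, hfrob, hfrob, hfrob]

end Form

section Link
variable {F : Type} [Field F] {n : ℕ}

def mkPt (v : Fin n → F) (hv : v ≠ 0) : ProjPoint F n :=
  ⟨Submodule.span F {v}, finrank_span_singleton hv⟩

def bb (S : Set (ProjPoint F n)) (v : Fin n → F) : Prop := ∃ P ∈ S, P.1 = Submodule.span F {v}

theorem bb_ne {S : Set (ProjPoint F n)} {v : Fin n → F} (h : bb S v) : v ≠ 0 := by
  rintro rfl
  obtain ⟨P, _, hP⟩ := h
  have := P.2
  rw [hP, Submodule.span_zero_singleton, finrank_bot] at this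
  exact zero_ne_one this

theorem bb_zero {S : Set (ProjPoint F n)} : ¬ bb S 0 := fun h => bb_ne h rfl

theorem bb_smul {S : Set (ProjPoint F n)} {c : F} (hc : c ≠ 0) (v : Fin n → F) :
    bb S (c • v) ↔ bb S v := by
  unfold bb
  rw [Submodule.span_singleton_smul_eq (IsUnit.mk0 c hc)]

theorem bb_iff {S : Set (ProjPoint F n)} {v : Fin n → F} (h : v ≠ 0) :
    bb S v ↔ mkPt v h ∈ S := by
  constructor
  · rintro ⟨P, hP, e⟩
    have : P = mkPt v h := Subtype.ext e
    rwa [← this]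
  · intro hS; exact ⟨_, hS, rfl⟩

theorem bb_pointsIn {H : Submodule F (Fin n → F)} {v : Fin n → F} (hv : v ≠ 0) :
    bb (pointsIn F n H) v ↔ v ∈ H := by
  rw [bb_iff hv]
  change Submodule.span F {v} ≤ H ↔ _
  rw [Submodule.span_singleton_le_iff_mem]

theorem pt_span (P : ProjPoint F n) {v : Fin n → F} (hv : v ≠ 0) (h : v ∈ P.1) :
    P.1 = Submodule.span F {v} := by
  symm
  apply Submodule.eq_of_le_of_finrank_eq
  · rwa [Submodule.span_singleton_le_iff_mem]
  · rw [finrank_span_singleton hv, P.2]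

theorem pt_ex (P : ProjPoint F n) : ∃ v, v ≠ 0 ∧ v ∈ P.1 := by
  have : P.1 ≠ ⊥ := by
    intro h
    have := P.2
    rw [h, finrank_bot] at this
    exact zero_ne_one this
  obtain ⟨v, h1, h2⟩ := Submodule.exists_mem_ne_zero_of_ne_bot this
  exact ⟨v, h2, h1⟩

theorem pt_bb {S : Set (ProjPoint F n)} (P : ProjPoint F n) {v : Fin n → F} (hv : v ≠ 0) (h : v ∈ P.1) :
    bb S v ↔ P ∈ S := by
  rw [bb_iff hv]
  have : P = mkPt v hv := Subtype.ext (pt_span P hv h)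
  rw [← this]

variable [Fintype F]

instance : Finite (ProjPoint F n) := by
  unfold ProjPoint
  infer_instance

theorem cnt (S : Set (ProjPoint F n)) (W : Submodule F (Fin n → F)) :
    Nat.card {v : Fin n → F // v ∈ W ∧ bb S v} = secant F n S W * (Fintype.card F - 1) := by
  classical
  haveI : Fintype (ProjPoint F n) := Fintype.ofFinite _
  rw [Nat.card_eq_fintype_card, Fintype.card_subtype, secant, Set.ncard_eq_toFinset_card']
  rw [← mul_one (Finset.card _)]
  apply Finset.card_mul_eq_card_mul (fun (v : Fin n → F) (P : ProjPoint F n) => v ∈ P.1)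
  · intro v hv
    rw [Finset.mem_filter] at hv
    obtain ⟨-, hW, hb⟩ := hv
    have hv0 := bb_ne hb
    rw [Finset.card_eq_one]
    refine ⟨mkPt v hv0, ?_⟩
    ext P
    rw [Finset.mem_bipartiteAbove, Finset.mem_singleton, Set.mem_toFinset]
    constructor
    · rintro ⟨_, h⟩
      exact Subtype.ext (pt_span P hv0 h)
    · rintro rfl
      refine ⟨⟨(bb_iff _).1 hb, ?_⟩, Submodule.mem_span_singleton_self v⟩
      change Submodule.span F {v} ≤ W
      rwa [Submodule.span_singleton_le_iff_mem]
  · intro P hP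
    rw [Set.mem_toFinset] at hP
    obtain ⟨v, hv0, hv⟩ := pt_ex P
    have hsp := pt_span P hv0 hv
    have : Finset.bipartiteBelow (fun (v : Fin n → F) (P : ProjPoint F n) => v ∈ P.1)
        (Finset.univ.filter fun v => v ∈ W ∧ bb S v) P = (Finset.univ.erase (0 : F)).image (fun c => c • v) := by
      ext z
      rw [Finset.mem_bipartiteBelow, Finset.mem_filter, Finset.mem_image]
      constructor
      · rintro ⟨⟨_, _, hb⟩, hz⟩
        rw [hsp, Submodule.mem_span_singleton] at hz
        obtain ⟨c, rfl⟩ := hz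
        refine ⟨c, ?_, rfl⟩
        rw [Finset.mem_erase]
        refine ⟨?_, Finset.mem_univ _⟩
        rintro rfl
        exact bb_ne hb (zero_smul _ _)
      · rintro ⟨c, hc, rfl⟩
        rw [Finset.mem_erase] at hc
        have hm : c • v ∈ P.1 := P.1.smul_mem c hv
        exact ⟨⟨Finset.mem_univ _, hP.2 hm, (bb_smul hc.1 v).2 ((pt_bb P hv0 hv).2 hP.1)⟩, hm⟩
    rw [this, Finset.card_image_of_injective _ (smul_left_injective F hv0),
      Finset.card_erase_of_mem (Finset.mem_univ _), Finset.card_univ]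

theorem line_le (S : Set (ProjPoint F n)) {u w : Fin n → F} (h : I2 F u w) :
    Nn F (bb S) u w ≤ secant F n S (Submodule.span F {u, w}) := by
  classical
  let vec : Option F → (Fin n → F) := fun o => o.elim u (fun x => x • u + w)
  have hne : ∀ o, vec o ≠ 0 := by
    rintro (_ | x) h0
    · exact h.ne h0
    · exact one_ne_zero (h x 1 (by simpa [vec] using h0)).2
  let f : Option F → ProjPoint F n := fun o => mkPt (vec o) (hne o)
  have hN : Nn F (bb S) u w = (Finset.univ.filter (fun o => bb S (vec o))).card := by
    rw [Finset.card_filter, Fintype.sum_option, Nn, xs_card]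
    rfl
  rw [hN, ← Set.ncard_coe_finset, secant]
  apply Set.ncard_le_ncard_of_injOn f
  · intro o ho
    simp only [Finset.coe_filter, Finset.mem_univ, true_and, Set.mem_ofPred_eq] at ho
    refine ⟨(bb_iff _).1 ho, ?_⟩
    change Submodule.span F {vec o} ≤ _
    rw [Submodule.span_singleton_le_iff_mem, Submodule.mem_span_pair]
    rcases o with _ | x
    · exact ⟨1, 0, by simp [vec]⟩
    · exact ⟨x, 1, by simp [vec]⟩
  · intro o _ o' _ hoo
    have he : Submodule.span F {vec o} = Submodule.span F {vec o'} := congrArg Subtype.val hoo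
    have hm : vec o ∈ Submodule.span F {vec o'} := by rw [← he]; exact Submodule.mem_span_singleton_self _
    rw [Submodule.mem_span_singleton] at hm
    obtain ⟨c, hc⟩ := hm
    rcases o with _ | x <;> rcases o' with _ | y
    · rfl
    · have hc : c • (y • u + w) = u := hc
      have := h (c * y - 1) c (by
        have e : (c * y - 1) • u + c • w = c • (y • u + w) - u := by module
        rw [e, hc, sub_self])
      simp [this.2] at this
    · have hc : c • u = x • u + w := hc
      have := h (c - x) (-1) (by
        have e : (c - x) • u + (-1 : F) • w = c • u - (x • u + w) := by module
        rw [e, hc, sub_self])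
      simp at this
    · have hc : c • (y • u + w) = x • u + w := hc
      have := h (c * y - x) (c - 1) (by
        have e : (c * y - x) • u + (c - 1) • w = c • (y • u + w) - (x • u + w) := by module
        rw [e, hc, sub_self])
      have h1 : c = 1 := by linear_combination this.2
      have h2 := this.1
      rw [h1] at h2
      congr 1
      linear_combination -h2

end Link

section Code
variable {F : Type} [Field F] [Fintype F] {n p : ℕ} [CharP F p]

open Classical in
noncomputable def cv (c : ProjPoint F n → ZMod p) (v : Fin n → F) : F :=
  if h : v ≠ 0 then ZMod.castHom (dvd_refl p) F (c (mkPt v h)) else 0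

theorem cv_zero (v : Fin n → F) : cv (0 : ProjPoint F n → ZMod p) v = 0 := by
  unfold cv
  split_ifs
  · simp
  · rfl

theorem cv_add (c d : ProjPoint F n → ZMod p) (v : Fin n → F) : cv (c + d) v = cv c v + cv d v := by
  unfold cv
  split_ifs
  · rw [Pi.add_apply, map_add]
  · simp

theorem cv_smul (a : ZMod p) (c : ProjPoint F n → ZMod p) (v : Fin n → F) :
    cv (a • c) v = ZMod.castHom (dvd_refl p) F a * cv c v := by
  unfold cv
  split_ifs
  · rw [Pi.smul_apply, smul_eq_mul, map_mul]
  · simp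

theorem cv_char (S : Set (ProjPoint F n)) (v : Fin n → F) :
    cv (charVec F p n S) v = (io (bb S) v : F) := by
  unfold cv
  split_ifs with h
  · by_cases hb : bb S v
    · rw [io_pos hb, charVec, Set.indicator_of_mem ((bb_iff h).1 hb)]
      simp
    · rw [io_neg hb, charVec, Set.indicator_of_notMem (fun h' => hb ((bb_iff h).2 h'))]
      simp
  · rw [io_neg]
    · simp
    · intro hb; exact h (bb_ne hb)

open Polynomial in
structure Good (c : ProjPoint F n → ZMod p) (l : F) : Prop where
  line : ∀ u w : Fin n → F, I2 F u w → cv c u + ∑ x : F, cv c (x • u + w) = l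
  tot : ∑ v : Fin n → F, cv c v = - l
  pow : ∀ u v w : Fin n → F, I3 F u v w → ∀ k, k + 1 < Fintype.card F → ∃ P : F[X], P.natDegree ≤ k ∧
    (∀ y, P.eval y = ∑ x : F, cv c (x • u + (y • v + w)) * x ^ k) ∧
      P.coeff k = ∑ x : F, cv c (x • u + v) * x ^ k

theorem Good.zero : Good (0 : ProjPoint F n → ZMod p) 0 := by
  constructor
  · intro u w _; simp [cv_zero]
  · simp [cv_zero]
  · intro u v w _ k _
    exact ⟨0, by simp, by simp [cv_zero], by simp [cv_zero]⟩

theorem Good.add {c d : ProjPoint F n → ZMod p} {l m : F} (hc : Good c l) (hd : Good d m) :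
    Good (c + d) (l + m) := by
  constructor
  · intro u w h
    simp only [cv_add, Finset.sum_add_distrib]
    rw [← hc.line u w h, ← hd.line u w h]; ring
  · simp only [cv_add, Finset.sum_add_distrib]
    rw [hc.tot, hd.tot]; ring
  · intro u v w h k hk
    obtain ⟨P, h1, h2, h3⟩ := hc.pow u v w h k hk
    obtain ⟨P', h1', h2', h3'⟩ := hd.pow u v w h k hk
    refine ⟨P + P', Polynomial.natDegree_add_le_of_degree_le h1 h1', ?_, ?_⟩
    · intro y
      simp only [cv_add, add_mul, Finset.sum_add_distrib, Polynomial.eval_add, h2, h2']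
    · simp only [cv_add, add_mul, Finset.sum_add_distrib, Polynomial.coeff_add, h3, h3']

theorem Good.smul {c : ProjPoint F n → ZMod p} {l : F} (hc : Good c l) (a : ZMod p) :
    Good (a • c) (ZMod.castHom (dvd_refl p) F a * l) := by
  constructor
  · intro u w h
    simp only [cv_smul, ← Finset.mul_sum]
    rw [← hc.line u w h]; ring
  · simp only [cv_smul, ← Finset.mul_sum]
    rw [hc.tot]; ring
  · intro u v w h k hk
    obtain ⟨P, h1, h2, h3⟩ := hc.pow u v w h k hk
    refine ⟨Polynomial.C (ZMod.castHom (dvd_refl p) F a) * P,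
      (Polynomial.natDegree_C_mul_le _ _).trans h1, ?_, ?_⟩
    · intro y
      simp only [cv_smul, mul_assoc, ← Finset.mul_sum, Polynomial.eval_mul, Polynomial.eval_C, h2]
    · simp only [cv_smul, mul_assoc, ← Finset.mul_sum, Polynomial.coeff_C_mul, h3]

/-- hyperplane as kernel of a functional -/
theorem hyp_ker {r : ℕ} (H : Submodule F (Fin (r + 1) → F)) (hH : finrank F H = r) :
    ∃ φ : (Fin (r + 1) → F) →ₗ[F] F, H = LinearMap.ker φ := by
  have hlt : H < ⊤ := by
    rw [lt_top_iff_ne_top]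
    rintro rfl
    simp at hH
  obtain ⟨φ, h0, hle⟩ := Submodule.exists_le_ker_of_lt_top H hlt
  refine ⟨φ, Submodule.eq_of_le_of_finrank_eq hle ?_⟩
  have := Module.Dual.finrank_ker_add_one_of_ne_zero h0
  simp at this
  rw [hH, this]

open Classical in
theorem sum_hyp (a d : F) (ha : a ≠ 0) (k : ℕ) :
    ∑ x : F, (if x * a + d = 0 then (1 : F) else 0) * x ^ k = (-(d * a⁻¹)) ^ k := by
  rw [Finset.sum_eq_single (-(d * a⁻¹))]
  · rw [if_pos, one_mul]
    field_simp; ring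
  · intro x _ hx
    rw [if_neg, zero_mul]
    intro h
    apply hx
    field_simp
    linear_combination h
  · intro h; exact absurd (Finset.mem_univ _) h

open Classical in
theorem cv_hyp {H : Submodule F (Fin n → F)} {φ : (Fin n → F) →ₗ[F] F} (h : H = LinearMap.ker φ)
    {v : Fin n → F} (hv : v ≠ 0) : cv (charVec F p n (pointsIn F n H)) v = if φ v = 0 then 1 else 0 := by
  rw [cv_char]
  by_cases h0 : φ v = 0
  · rw [if_pos h0, io_pos, Nat.cast_one]
    rw [bb_pointsIn hv, h]; exact h0
  · rw [if_neg h0, io_neg, Nat.cast_zero]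
    rw [bb_pointsIn hv, h]; exact h0

theorem I2.ne' {E : Type} [AddCommGroup E] [Module F E] {u w : E} (h : I2 F u w) (x : F) : x • u + w ≠ 0 := by
  intro h0
  have := h x 1 (by simpa using h0)
  exact one_ne_zero this.2

theorem Good.hyp {r : ℕ} (hr : 1 ≤ r) (H : Submodule F (Fin (r + 1) → F)) (hH : finrank F H = r) :
    Good (charVec F p (r + 1) (pointsIn F (r + 1) H)) 1 := by
  classical
  obtain ⟨φ, hφ⟩ := hyp_ker H hH
  constructor
  · intro u w h
    rw [cv_hyp hφ h.ne, Finset.sum_congr rfl (fun x _ => cv_hyp hφ (h.ne' x))]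
    simp only [map_add, map_smul, smul_eq_mul]
    by_cases hu : φ u = 0
    · simp only [hu, mul_zero, zero_add, if_true, Finset.sum_const, Finset.card_univ, nsmul_eq_mul]
      simp
    · have := sum_hyp (φ u) (φ w) hu 0
      simp only [pow_zero, mul_one] at this
      rw [this, if_neg hu, zero_add]
  · have h1 : ∀ v : Fin (r+1) → F, cv (charVec F p (r + 1) (pointsIn F (r + 1) H)) v =
        (if v ∈ H then 1 else 0) - (if v = 0 then 1 else 0) := by
      intro v
      by_cases hv : v = 0
      · subst hv; simp [cv]
      · rw [cv_char, if_neg hv, sub_zero]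
        by_cases h0 : v ∈ H
        · rw [if_pos h0, io_pos ((bb_pointsIn hv).2 h0)]; simp
        · rw [if_neg h0, io_neg (fun h => h0 ((bb_pointsIn hv).1 h))]; simp
    simp only [h1, Finset.sum_sub_distrib, Finset.sum_boole]
    have h2 : (Finset.univ.filter (fun v : Fin (r+1) → F => v ∈ H)).card = Fintype.card F ^ r := by
      rw [← Fintype.card_subtype, ← Nat.card_eq_fintype_card, ← Nat.card_eq_fintype_card]
      have h3 := Module.natCard_eq_pow_finrank (K := F) (V := H)
      rw [hH] at h3
      exact h3
    have h4 : (Finset.univ.filter (fun v : Fin (r+1) → F => v = 0)).card = 1 := by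
      rw [Finset.filter_eq']; simp
    rw [h2, h4, Nat.cast_pow, FiniteField.cast_card_eq_zero, zero_pow (by omega)]
    simp
  · intro u v w h k hk
    have ez : ∀ y, ∀ x : F, x • u + (y • v + w) ≠ 0 := fun y x => (h.i2y y).ne' x
    have ev : ∀ x : F, x • u + v ≠ 0 := fun x => h.i2.ne' x
    have s1 : ∀ y, ∑ x : F, cv (charVec F p (r + 1) (pointsIn F (r + 1) H)) (x • u + (y • v + w)) * x ^ k =
        ∑ x : F, (if x * φ u + (y * φ v + φ w) = 0 then (1 : F) else 0) * x ^ k := by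
      intro y
      refine Finset.sum_congr rfl fun x _ => ?_
      rw [cv_hyp hφ (ez y x)]
      simp only [map_add, map_smul, smul_eq_mul]
    have s2 : ∑ x : F, cv (charVec F p (r + 1) (pointsIn F (r + 1) H)) (x • u + v) * x ^ k =
        ∑ x : F, (if x * φ u + φ v = 0 then (1 : F) else 0) * x ^ k := by
      refine Finset.sum_congr rfl fun x _ => ?_
      rw [cv_hyp hφ (ev x)]
      simp only [map_add, map_smul, smul_eq_mul]
    simp only [s1, s2]
    by_cases hu : φ u = 0
    · have hs : ∑ x : F, x ^ k = 0 := FiniteField.sum_pow_lt_card_sub_one F k (by omega)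
      refine ⟨0, by simp, ?_, ?_⟩
      · intro y
        simp only [hu, mul_zero, zero_add, ← Finset.mul_sum, hs]
        simp
      · simp only [hu, mul_zero, zero_add, ← Finset.mul_sum, hs]
        simp
    · have hd : (Polynomial.C (-(φ v * (φ u)⁻¹)) * Polynomial.X + Polynomial.C (-(φ w * (φ u)⁻¹)) :
          Polynomial F).natDegree ≤ 1 := Polynomial.natDegree_linear_le
      refine ⟨(Polynomial.C (-(φ v * (φ u)⁻¹)) * Polynomial.X + Polynomial.C (-(φ w * (φ u)⁻¹))) ^ k, ?_, ?_, ?_⟩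
      · have := Polynomial.natDegree_pow_le_of_le k hd
        omega
      · intro y
        rw [sum_hyp _ _ hu]
        simp only [Polynomial.eval_pow, Polynomial.eval_add, Polynomial.eval_mul, Polynomial.eval_C, Polynomial.eval_X]
        congr 1
        ring
      · rw [sum_hyp _ _ hu]
        have := Polynomial.coeff_pow_of_natDegree_le (m := k) hd
        rw [mul_one] at this
        rw [this]
        simp

theorem Good.ex {r : ℕ} (hr : 1 ≤ r) (c : ProjPoint F (r + 1) → ZMod p) (hc : c ∈ hypCode F p (r + 1)) :
    ∃ l, Good c l := by
  unfold hypCode at hc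
  induction hc using Submodule.span_induction with
  | mem x hx =>
    obtain ⟨H, hH, rfl⟩ := hx
    exact ⟨1, Good.hyp hr H (by simpa using hH)⟩
  | zero => exact ⟨0, Good.zero⟩
  | add x y _ _ hx hy =>
    obtain ⟨l, hl⟩ := hx
    obtain ⟨m, hm⟩ := hy
    exact ⟨_, hl.add hm⟩
  | smul a x _ hx =>
    obtain ⟨l, hl⟩ := hx
    exact ⟨_, hl.smul a⟩

end Code

theorem xs_coe {F : Type} [Field F] [Fintype F] {n : ℕ} (π : Submodule F (Fin n → F)) (b : (Fin n → F) → Prop)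
    (u w : π) : xs F (fun v : π => b v) u w = xs F b (u : Fin n → F) w := by
  ext x
  rw [mem_xs, mem_xs]
  rfl

theorem I2_coe {F : Type} [Field F] {n : ℕ} {π : Submodule F (Fin n → F)}
    {u w : π} (h : I2 F u w) : I2 F (u : Fin n → F) w := by
  intro a b hab
  exact h a b (Subtype.ext hab)

theorem I3_coe {F : Type} [Field F] {n : ℕ} {π : Submodule F (Fin n → F)}
    {u v w : π} (h : I3 F u v w) : I3 F (u : Fin n → F) v w := by
  intro a b c hab
  exact h a b c (Subtype.ext hab)

theorem Nn_coe {F : Type} [Field F] [Fintype F] {n : ℕ} (π : Submodule F (Fin n → F)) (b : (Fin n → F) → Prop)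
    (u w : π) : Nn F (fun v : π => b v) u w = Nn F b (u : Fin n → F) w := by
  rw [Nn, Nn, xs_coe]; rfl

theorem sum_xs {F E : Type} [Field F] [Fintype F] [AddCommGroup E] [Module F E] (b : E → Prop) (u w : E) (k : ℕ) :
    ∑ x ∈ xs F b u w, x ^ k = ∑ x : F, (io b (x • u + w) : F) * x ^ k := by
  classical
  rw [xs, Finset.sum_filter]
  refine Finset.sum_congr rfl fun x _ => ?_
  by_cases h : b (x • u + w)
  · rw [io_pos h, if_pos h]; simp
  · rw [io_neg h, if_neg h]; simp

theorem mkCfg (p h q r : ℕ) (hp : p.Prime) (hh : 1 ≤ h) (hq : q = p ^ h) (hq4 : 4 < q)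
    (hr : 3 ≤ r)
    (F : Type) [Field F] [Fintype F] (hF : Fintype.card F = q ^ 2)
    (V : Set (ProjPoint F (r + 1))) (hV : IsQuasiHermitian F q r V)
    (hcode : charVec F p (r + 1) V ∈ hypCode F p (r + 1))
    (π : Submodule F (Fin (r + 1) → F)) (hπ : finrank F π = 3)
    (hlines : ∀ ℓ : Submodule F (Fin (r + 1) → F), ℓ ≤ π → finrank F ℓ = 2 →
      secant F (r + 1) V ℓ ≤ q + 1) : Cfg F π q (fun v : π => bb V (v : Fin (r + 1) → F)) := by
  classical
  have : CharP F p := by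
    obtain ⟨p', hp'⟩ := CharP.exists F
    obtain ⟨⟨m, hm⟩, h1, h2⟩ := FiniteField.card F p'
    have : p' = p := by
      have h3 : p' ∣ p ^ (h * 2) := by
        rw [pow_mul, ← hq, ← hF, h2]
        exact dvd_pow_self _ (by simpa using hm.ne')
      exact (Nat.prime_dvd_prime_iff_eq h1 hp).1 (h1.dvd_of_dvd_pow h3)
    rwa [← this]
  have qF : (q : F) = 0 := by
    rw [hq, Nat.cast_pow, CharP.cast_eq_zero, zero_pow (by omega)]
  obtain ⟨l, hl⟩ := Good.ex (by omega) _ hcode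
  have h1 : l = 1 := by
    have ht := hl.tot
    simp only [cv_char] at ht
    have hc := cnt V ⊤
    have hc2 : Nat.card {v : Fin (r+1) → F // v ∈ (⊤ : Submodule F (Fin (r+1) → F)) ∧ bb V v} = ∑ v, io (bb V) v := by
      rw [Nat.card_eq_fintype_card, Fintype.card_subtype, Finset.card_filter]
      refine Finset.sum_congr rfl fun v _ => ?_
      simp [io]
    have hs : secant F (r + 1) V ⊤ = V.ncard := by
      unfold secant
      congr 1
      ext P
      simp [pointsIn]
    rw [hc2, hs] at hc
    rw [← Nat.cast_sum, hc, hF, Nat.cast_mul, Nat.cast_sub (by nlinarith)] at ht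
    have h3 := congrArg (Int.cast : ℤ → F) hV.1
    push_cast at h3 ht
    rw [qF] at h3 ht
    rw [ht, zero_pow (by omega), zero_pow (by omega), zero_add, zero_sub, mul_neg, ← mul_pow] at h3
    simp at h3
    exact h3
  subst h1
  refine ⟨by omega, hF, qF, hπ, bb_zero, ?_, ?_, ?_, ?_⟩
  · intro c hc v
    exact bb_smul hc _
  · intro u w h
    have := hl.line _ _ (I2_coe h)
    simp only [cv_char] at this
    rw [Nn_coe, Nn, xs_card]
    push_cast
    exact this
  · intro u w h
    rw [Nn_coe]
    refine (line_le V (I2_coe h)).trans (hlines _ ?_ ?_)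
    · rw [Submodule.span_le]
      rintro x (rfl | rfl)
      · exact u.2
      · exact w.2
    · have := finrank_span_eq_card (I2_iff.1 (I2_coe h))
      rw [Matrix.range_cons_cons_empty, Fintype.card_fin] at this
      exact this
  · intro u v w h k hk
    obtain ⟨P, g1, g2, g3⟩ := hl.pow _ _ _ (I3_coe h) k (by rw [hF]; have : 16 ≤ q ^ 2 := by nlinarith
                                                            omega)
    refine ⟨P, g1, ?_, ?_⟩
    · intro y
      rw [g2, xs_coe, sum_xs]
      simp only [cv_char]
      rfl
    · rw [g3, xs_coe, sum_xs]
      simp only [cv_char]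

/-- if a plane `π` meets `V` in at most `q³ + 2q²` points and every
line of `π` meets `π ∩ V` in at most `q + 1` points, then `π ∩ V` is a classical
unital of `π`; in particular `|π ∩ V| = q³ + 1`. -/
theorem stmt8 (p h q r : ℕ) (hp : p.Prime) (hh : 1 ≤ h) (hq : q = p ^ h) (hq4 : 4 < q)
    (hr : 3 ≤ r)
    (F : Type) [Field F] [Fintype F] (hF : Fintype.card F = q ^ 2)
    (V : Set (ProjPoint F (r + 1))) (hV : IsQuasiHermitian F q r V)
    (hcode : charVec F p (r + 1) V ∈ hypCode F p (r + 1))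
    (π : Submodule F (Fin (r + 1) → F)) (hπ : finrank F π = 3)
    (hsize : secant F (r + 1) V π ≤ q ^ 3 + 2 * q ^ 2)
    (hlines : ∀ ℓ : Submodule F (Fin (r + 1) → F), ℓ ≤ π → finrank F ℓ = 2 →
      secant F (r + 1) V ℓ ≤ q + 1) :
    IsClassicalUnital F q (r + 1) π (V ∩ pointsIn F (r + 1) π) ∧
      secant F (r + 1) V π = q ^ 3 + 1 := by
  classical
  have C := mkCfg p h q r hp hh hq hq4 hr F hF V hV hcode π hπ hlines
  have : Fintype π := Fintype.ofFinite _
  constructor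
  · obtain ⟨e1, e2, e3, a, c, hI, ha, hc, haq, hcq, hform⟩ := C.form
    have hq0 : q ≠ 0 := by omega
    let e : (Fin 3 → F) →ₗ[F] (Fin (r + 1) → F) :=
      { toFun := fun y => ((y 0 • e1 + y 1 • e2 + y 2 • e3 : π) : Fin (r + 1) → F)
        map_add' := fun y z => by
          rw [← Submodule.coe_add]; congr 1; simp only [Pi.add_apply]; module
        map_smul' := fun t y => by
          rw [← Submodule.coe_smul]; congr 1; simp only [Pi.smul_apply, smul_eq_mul, RingHom.id_apply]; module }
    have he : ∀ y, e y = ((y 0 • e1 + y 1 • e2 + y 2 • e3 : π) : Fin (r + 1) → F) := fun y => rfl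
    have hker : LinearMap.ker e = ⊥ := by
      rw [LinearMap.ker_eq_bot']
      intro y hy
      have := hI (y 0) (y 1) (y 2) (Subtype.ext hy)
      ext i
      fin_cases i
      · exact this.1
      · exact this.2.1
      · exact this.2.2
    have hrange : LinearMap.range e = π := by
      apply Submodule.eq_of_le_of_finrank_eq
      · rintro _ ⟨y, rfl⟩
        rw [he]; exact Subtype.property _
      · rw [LinearMap.finrank_range_of_inj (LinearMap.ker_eq_bot.1 hker), hπ]; simp
    refine ⟨e, hker, hrange, Matrix.diagonal ![1, a, c], ?_, ?_, ?_⟩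
    · rw [Matrix.det_diagonal, Fin.prod_univ_three]
      simp [ha, hc]
    · rw [Matrix.diagonal_transpose]
      ext i j
      fin_cases i <;> fin_cases j <;> simp [haq, hcq, hq0]
    · have hsum : ∀ y : Fin 3 → F, ∑ i, ∑ j, y i * (Matrix.diagonal ![1, a, c] : Matrix (Fin 3) (Fin 3) F) i j * (y j) ^ q =
          y 0 * y 0 ^ q + a * (y 1 * y 1 ^ q) + c * (y 2 * y 2 ^ q) := by
        intro y
        simp [Fin.sum_univ_three, Matrix.diagonal]
        ring
      have hy0 : ∀ y : Fin 3 → F, y ≠ 0 → ¬ (y 0 = 0 ∧ y 1 = 0 ∧ y 2 = 0) := by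
        rintro y hy ⟨g1, g2, g3⟩
        apply hy
        ext i
        fin_cases i
        · exact g1
        · exact g2
        · exact g3
      ext P
      constructor
      · rintro ⟨hPV, hPπ⟩
        obtain ⟨v, hv0, hv⟩ := pt_ex P
        have hvr : v ∈ LinearMap.range e := by rw [hrange]; exact hPπ hv
        obtain ⟨y, rfl⟩ := hvr
        have hy : y ≠ 0 := by rintro rfl; exact hv0 (map_zero e)
        refine ⟨y, hy, pt_span P hv0 hv, ?_⟩
        rw [hsum, ← hform _ _ _ (hy0 y hy)]
        exact (pt_bb P hv0 hv).2 hPV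
      · rintro ⟨y, hy, hP, hs⟩
        rw [hsum, ← hform _ _ _ (hy0 y hy)] at hs
        have hv : e y ∈ P.1 := by rw [hP]; exact Submodule.mem_span_singleton_self _
        have hv0 : e y ≠ 0 := bb_ne (S := V) hs
        refine ⟨(pt_bb P hv0 hv).1 hs, ?_⟩
        change P.1 ≤ π
        rw [hP, Submodule.span_singleton_le_iff_mem, ← hrange]
        exact ⟨y, rfl⟩
  · have h1 := C.unital.1
    have h2 := cnt V π
    have h3 : Nat.card {v : Fin (r+1) → F // v ∈ π ∧ bb V v} = Mm (fun v : π => bb V (v : Fin (r+1) → F)) := by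
      rw [← Nat.card_congr (Equiv.subtypeSubtypeEquivSubtypeInter (fun v => v ∈ π) (bb V)), Mm,
        Nat.card_eq_fintype_card, Fintype.card_subtype, Finset.card_filter]
      rfl
    rw [h3, h1, hF, mul_comm] at h2
    exact (Nat.eq_of_mul_eq_mul_right C.Qpos h2).symm
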